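/- arXiv:2306.14570 — 2 statements merged into one kernel-verified Lean document; each statement's English description precedes it below -/
import Mathlib

section
/- Norm inflation with infinite loss of regularity at general initial data in H^s for gIBq: let k ≥ 2 be an integer, σ ∈ ℝ and s < 0, and let v₀, v₁ : ℝ → ℂ be measurable with ‖⟨ξ⟩^s v₀‖_{L²(ℝ)} < ∞ and ‖⟨ξ⟩^s v₁‖_{L²(ℝ)} < ∞. Then for every ε > 0 there exist T ∈ (0, ε), measurable functions w₀, w₁ ∈ L¹(ℝ) and a Fourier-side solution v of gIBq with nonlinearity u^k and data (w₀, w₁) on [0, T] such that ‖⟨ξ⟩^s (w₀ − v₀)‖_{L²(ℝ)} + ‖⟨ξ⟩^s (w₁ − v₁)‖_{L²(ℝ)} < ε and ‖⟨ξ⟩^σ v(T)‖_{L²(ℝ)} > ε⁻¹. -/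
open MeasureTheory Filter
open scoped ENNReal

noncomputable section

/-- The Japanese bracket weight `⟨ξ⟩^s = (1+ξ²)^(s/2)`. -/
def jbw (s ξ : ℝ) : ℝ := (1 + ξ ^ 2) ^ (s / 2)

/-- `λ(ξ) = |ξ|/⟨ξ⟩`. -/
def lam (ξ : ℝ) : ℝ := |ξ| / (1 + ξ ^ 2) ^ ((1 : ℝ) / 2)

/-- The multiplier `m(t,ξ) = sin(tλ(ξ))/λ(ξ)` for `ξ ≠ 0`, `m(t,0) = t`. -/
def mker (t ξ : ℝ) : ℝ := if ξ = 0 then t else Real.sin (t * lam ξ) / lam ξ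

/-- Fourier side linear propagator `Ŝ(t)(v₀,v₁)`. -/
def Shat (t : ℝ) (v₀ v₁ : ℝ → ℂ) (ξ : ℝ) : ℂ :=
  (Real.cos (t * lam ξ) : ℂ) * v₀ ξ + (mker t ξ : ℂ) * v₁ ξ

/-- Convolution of complex valued functions on `ℝ`. -/
def conv (f g : ℝ → ℂ) (ξ : ℝ) : ℂ := ∫ η, f η * g (ξ - η)

/-- Iterated convolution of a list of functions. -/
def convList : List (ℝ → ℂ) → ℝ → ℂ
  | [] => fun _ => 0
  | [f] => f
  | f :: g :: fs => conv f (convList (g :: fs))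

/-- Fourier side Duhamel operator `Î_k`. -/
def Ihat (k : ℕ) (w : Fin k → ℝ → ℝ → ℂ) (t ξ : ℝ) : ℂ :=
  ∫ t' in (0:ℝ)..t,
    ((Real.sin ((t - t') * lam ξ) * lam ξ : ℝ) : ℂ) * convList (List.ofFn fun i => w i t') ξ

/-- Continuity of a curve of functions with respect to the `L¹` norm, on `[0,T]`. -/
def ContinuousL1On (T : ℝ) (v : ℝ → ℝ → ℂ) : Prop :=
  ∀ t₀ ∈ Set.Icc (0 : ℝ) T,
    Tendsto (fun t => eLpNorm (fun ξ => v t ξ - v t₀ ξ) 1 volume)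
      (nhdsWithin t₀ (Set.Icc (0 : ℝ) T)) (nhds 0)

/-- Fourier-side solution of the generalized improved Boussinesq equation with
nonlinearity `u^k` and data `(v₀, v₁)` on `[0, T]`. -/
def IsGIBqSol (k : ℕ) (T : ℝ) (v₀ v₁ : ℝ → ℂ) (v : ℝ → ℝ → ℂ) : Prop :=
  (∀ t ∈ Set.Icc (0 : ℝ) T, Integrable (v t)) ∧
  ContinuousL1On T v ∧
  ∀ t ∈ Set.Icc (0 : ℝ) T,
    ∀ᵐ ξ ∂volume, v t ξ = Shat t v₀ v₁ ξ + Ihat k (fun _ => v) t ξ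

/-- Picard iterates `Ξ̂_j` for gIBq on the Fourier side. -/
def Xi (k : ℕ) (v₀ v₁ : ℝ → ℂ) : ℕ → ℝ → ℝ → ℂ
  | 0 => fun t => Shat t v₀ v₁
  | (j+1) => fun t ξ =>
      ∑ p ∈ (Finset.Nat.antidiagonalTuple k j).attach,
        Ihat k (fun i => Xi k v₀ v₁ (p.1 i)) t ξ
decreasing_by
  have hsum := Finset.Nat.mem_antidiagonalTuple.mp p.2
  have hle : p.1 i ≤ j := by
    calc p.1 i ≤ ∑ i', p.1 i' :=
          Finset.single_le_sum (fun _ _ => Nat.zero_le _) (Finset.mem_univ i)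
      _ = j := hsum
  omega

/-- The `FL^{s,p}` norm on the Fourier side: `‖⟨ξ⟩^s w‖_{L^p}`. -/
def FLnorm (s : ℝ) (p : ℝ≥0∞) (w : ℝ → ℂ) : ℝ≥0∞ :=
  eLpNorm (fun ξ => jbw s ξ * ‖w ξ‖) p volume

end

section genconv
variable {A : Type*} [NormedRing A] [NormedAlgebra ℝ A]

noncomputable abbrev LX (A : Type*) [NormedRing A] := Lp A 1 (volume : Measure ℝ)

theorem cvInt (f g : LX A) :
    Integrable (convolution (f : ℝ → A) (g : ℝ → A) (ContinuousLinearMap.mul ℝ A) volume) :=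
  (L1.integrable_coeFn f).integrable_convolution _ (L1.integrable_coeFn g)

/-- convolution on `L¹(ℝ; A)` -/
noncomputable def cv (f g : LX A) : LX A := (cvInt f g).toL1 _

theorem cv_ae (f g : LX A) :
    ∀ᵐ ξ, Integrable (fun η => f η * g (ξ - η)) ∧ cv f g ξ = ∫ η, f η * g (ξ - η) := by
  have h1 := (L1.integrable_coeFn f).ae_convolution_exists (ContinuousLinearMap.mul ℝ A)
    (L1.integrable_coeFn g)
  filter_upwards [h1, (cvInt f g).coeFn_toL1] with ξ h1 h2
  exact ⟨h1, h2⟩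

theorem cv_norm (f g : LX A) : ‖cv f g‖ ≤ ‖f‖ * ‖g‖ := by
  have hf := (L1.integrable_coeFn f)
  have hg := (L1.integrable_coeFn g)
  rw [L1.norm_eq_integral_norm, L1.norm_eq_integral_norm f, L1.norm_eq_integral_norm g]
  have h := integral_convolution (ContinuousLinearMap.mul ℝ ℝ) (μ := volume) (ν := volume)
    hf.norm hg.norm
  simp only [ContinuousLinearMap.mul_apply'] at h
  rw [← h]
  refine integral_mono_ae (L1.integrable_coeFn _).norm
    (hf.norm.integrable_convolution _ hg.norm) ?_
  filter_upwards [cv_ae f g, hf.norm.ae_convolution_exists (ContinuousLinearMap.mul ℝ ℝ)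
    hg.norm] with ξ h1 h2
  simp only [h1.2]
  refine (norm_integral_le_integral_norm _).trans ?_
  exact integral_mono h1.1.norm h2 (fun η => norm_mul_le _ _)

theorem cv_sub_left (f f' g : LX A) : cv (f - f') g = cv f g - cv f' g := by
  refine Lp.ext ?_
  filter_upwards [cv_ae (f - f') g, cv_ae f g, cv_ae f' g, Lp.coeFn_sub (cv f g) (cv f' g)]
    with ξ h1 h2 h3 h4
  rw [h1.2, h4, Pi.sub_apply, h2.2, h3.2, ← integral_sub h2.1 h3.1]
  refine integral_congr_ae ?_
  filter_upwards [Lp.coeFn_sub f f'] with η h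
  rw [h, Pi.sub_apply, sub_mul]

theorem ae_sub_left {p : ℝ → Prop} (h : ∀ᵐ x, p x) (ξ : ℝ) : ∀ᵐ η, p (ξ - η) :=
  (quasiMeasurePreserving_sub_left_of_right_invariant volume ξ).ae h

theorem cv_sub_right (f g g' : LX A) : cv f (g - g') = cv f g - cv f g' := by
  refine Lp.ext ?_
  filter_upwards [cv_ae f (g - g'), cv_ae f g, cv_ae f g', Lp.coeFn_sub (cv f g) (cv f g')]
    with ξ h1 h2 h3 h4
  rw [h1.2, h4, Pi.sub_apply, h2.2, h3.2, ← integral_sub h2.1 h3.1]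
  refine integral_congr_ae ?_
  filter_upwards [ae_sub_left (Lp.coeFn_sub g g') ξ] with η h
  rw [h, Pi.sub_apply, mul_sub]

/-- `(j+1)`-fold convolution power -/
noncomputable def cpow (V : LX A) : ℕ → LX A
  | 0 => V
  | j + 1 => cv V (cpow V j)

theorem cpow_norm (V : LX A) {r : ℝ} (hV : ‖V‖ ≤ r) (j : ℕ) : ‖cpow V j‖ ≤ r ^ (j + 1) := by
  have hr : 0 ≤ r := (norm_nonneg _).trans hV
  induction j with
  | zero => simpa [cpow] using hV
  | succ j ih =>
    refine (cv_norm _ _).trans ?_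
    rw [pow_succ' r (j+1)]
    exact mul_le_mul hV ih (norm_nonneg _) hr

theorem cpow_sub (V W : LX A) {r : ℝ} (hV : ‖V‖ ≤ r) (hW : ‖W‖ ≤ r) (j : ℕ) :
    ‖cpow V j - cpow W j‖ ≤ (j + 1) * r ^ j * ‖V - W‖ := by
  have hr : 0 ≤ r := (norm_nonneg _).trans hV
  induction j with
  | zero => simp [cpow]
  | succ j ih =>
    have : cpow V (j+1) - cpow W (j+1) = cv (V - W) (cpow V j) + cv W (cpow V j - cpow W j) := by
      simp only [cpow, cv_sub_left, cv_sub_right]; abel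
    rw [this]
    refine (norm_add_le _ _).trans ?_
    have h1 : ‖cv (V - W) (cpow V j)‖ ≤ ‖V - W‖ * r ^ (j+1) :=
      (cv_norm _ _).trans (mul_le_mul_of_nonneg_left (cpow_norm V hV j) (norm_nonneg _))
    have h2 : ‖cv W (cpow V j - cpow W j)‖ ≤ r * ((j + 1) * r ^ j * ‖V - W‖) :=
      (cv_norm _ _).trans (mul_le_mul hW ih (norm_nonneg _) hr)
    refine (add_le_add h1 h2).trans (le_of_eq ?_)
    push_cast
    ring

end genconv
theorem one_add_sq_pos (ξ : ℝ) : 0 < 1 + ξ ^ 2 := by positivity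

theorem lam_nonneg (ξ : ℝ) : 0 ≤ lam ξ := by
  have := one_add_sq_pos ξ
  unfold lam; positivity

theorem lam_sqrt (ξ : ℝ) : lam ξ = |ξ| / Real.sqrt (1 + ξ ^ 2) := by
  rw [lam, Real.sqrt_eq_rpow]

theorem lam_sq (ξ : ℝ) : lam ξ ^ 2 = ξ ^ 2 / (1 + ξ ^ 2) := by
  rw [lam_sqrt, div_pow, sq_abs, Real.sq_sqrt (one_add_sq_pos ξ).le]

theorem lam_le_one (ξ : ℝ) : lam ξ ≤ 1 := by
  have h := one_add_sq_pos ξ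
  have : lam ξ ^ 2 ≤ 1 := by
    rw [lam_sq, div_le_one h]; linarith
  nlinarith [lam_nonneg ξ]

theorem lam_cont : Continuous lam := by
  have : lam = fun ξ => |ξ| / Real.sqrt (1 + ξ ^ 2) := funext lam_sqrt
  rw [this]
  refine Continuous.div (by fun_prop) (by fun_prop) (fun ξ => ?_)
  exact (Real.sqrt_pos.2 (one_add_sq_pos ξ)).ne'

theorem mker_eq (t ξ : ℝ) : mker t ξ = t * Real.sinc (t * lam ξ) := by
  unfold mker
  split_ifs with h
  · simp [h, lam]
  · have hl : lam ξ ≠ 0 := by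
      have : 0 < lam ξ ^ 2 := by
        rw [lam_sq]; have := one_add_sq_pos ξ; positivity
      intro h0; rw [h0] at this; simp at this
    by_cases ht : t = 0
    · simp [ht]
    · rw [Real.sinc_of_ne_zero (mul_ne_zero ht hl)]
      field_simp

abbrev TC (T : ℝ) := C(Set.Icc (0:ℝ) T, ℂ)

noncomputable section Duh
variable {T : ℝ} (hT : 0 ≤ T)

/-- the integrand of the Duhamel operator -/
def duhI (ξ : ℝ) (g : TC T) (t t' : ℝ) : ℂ :=
  ((Real.sin ((t - t') * lam ξ) * lam ξ : ℝ) : ℂ) * g (Set.projIcc 0 T hT t')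

theorem duhI_cont (g : TC T) :
    Continuous (fun p : (ℝ × Set.Icc (0:ℝ) T) × ℝ => duhI hT p.1.1 g p.1.2 p.2) := by
  unfold duhI
  have := lam_cont
  have h2 : Continuous (Set.projIcc 0 T hT) := continuous_projIcc
  fun_prop

theorem duhI_cont' (ξ : ℝ) (g : TC T) (t : ℝ) : Continuous (fun t' => duhI hT ξ g t t') := by
  unfold duhI
  have h2 : Continuous (Set.projIcc 0 T hT) := continuous_projIcc
  fun_prop

theorem duh_cont2 (g : TC T) : Continuous (fun p : ℝ × Set.Icc (0:ℝ) T =>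
    ∫ t' in (0:ℝ)..p.2, duhI hT p.1 g p.2 t') :=
  intervalIntegral.continuous_parametric_intervalIntegral_of_continuous
    (f := fun (p : ℝ × Set.Icc (0:ℝ) T) t' => duhI hT p.1 g p.2 t') (duhI_cont hT g) (by fun_prop)

def duh (ξ : ℝ) (g : TC T) : TC T :=
  ⟨fun t => ∫ t' in (0:ℝ)..t, duhI hT ξ g t t', by
    exact (duh_cont2 hT g).comp (by fun_prop : Continuous fun t : Set.Icc (0:ℝ) T => (ξ, t))⟩

theorem duh_norm (ξ : ℝ) (g : TC T) : ‖duh hT ξ g‖ ≤ T ^ 2 * ‖g‖ := by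
  refine (ContinuousMap.norm_le _ (by positivity)).2 fun t => ?_
  have ht := t.2
  have : ‖duh hT ξ g t‖ ≤ (T * ‖g‖) * |(t:ℝ) - 0| := by
    refine intervalIntegral.norm_integral_le_of_norm_le_const fun t' ht' => ?_
    rw [Set.uIoc_of_le ht.1] at ht'
    unfold duhI
    rw [norm_mul, Complex.norm_real, Real.norm_eq_abs, abs_mul]
    have h1 : |Real.sin ((t - t') * lam ξ)| ≤ T := by
      refine (Real.abs_sin_le_abs).trans ?_
      rw [abs_mul, abs_of_nonneg (lam_nonneg ξ), abs_of_nonneg (by linarith [ht'.2])]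
      have := lam_le_one ξ
      nlinarith [ht'.1, ht'.2, ht.2, lam_nonneg ξ]
    have h2 : |lam ξ| ≤ 1 := by rw [abs_of_nonneg (lam_nonneg ξ)]; exact lam_le_one ξ
    refine mul_le_mul ?_ (g.norm_coe_le_norm _) (norm_nonneg _) hT
    nlinarith [abs_nonneg (Real.sin ((t - t') * lam ξ)), abs_nonneg (lam ξ)]
  refine this.trans ?_
  rw [sub_zero, abs_of_nonneg ht.1]
  nlinarith [ht.2, mul_nonneg hT (norm_nonneg g)]

theorem duh_sub (ξ : ℝ) (g h : TC T) : duh hT ξ (g - h) = duh hT ξ g - duh hT ξ h := by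
  ext t
  simp only [duh, ContinuousMap.coe_mk, ContinuousMap.sub_apply]
  rw [← intervalIntegral.integral_sub]
  · simp [duhI, mul_sub]
  · exact (duhI_cont' hT ξ g t).intervalIntegrable _ _
  · exact (duhI_cont' hT ξ h t).intervalIntegrable _ _

theorem duh_cont : Continuous (fun p : ℝ × TC T => duh hT p.1 p.2) := by
  refine continuous_prod_of_continuous_lipschitzWith' _ (⟨T ^ 2, by positivity⟩) (fun ξ => ?_)
    (fun g => ?_)
  · refine LipschitzWith.of_dist_le_mul fun g h => ?_
    rw [dist_eq_norm, dist_eq_norm, ← duh_sub]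
    exact duh_norm hT ξ _
  · exact ContinuousMap.continuous_of_continuous_uncurry _ (duh_cont2 hT g)

theorem duhInt0 {G : ℝ → TC T} (hG : Integrable G) : Integrable (fun ξ => duh hT ξ (G ξ)) := by
  have hm : AEStronglyMeasurable (fun ξ => duh hT ξ (G ξ)) volume := by
    have h2 : AEStronglyMeasurable (fun ξ : ℝ => (ξ, G ξ)) volume :=
      AEStronglyMeasurable.prodMk (f := fun ξ : ℝ => ξ) aestronglyMeasurable_id
        hG.aestronglyMeasurable
    exact Continuous.comp_aestronglyMeasurable (f := fun ξ : ℝ => (ξ, G ξ)) (duh_cont hT) h2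
  exact Integrable.mono' (g := fun ξ => T ^ 2 * ‖G ξ‖) (hG.norm.const_mul (T^2)) hm
    (ae_of_all _ fun ξ => duh_norm hT ξ (G ξ))

theorem duhInt (G : LX (TC T)) : Integrable (fun ξ => duh hT ξ (G ξ)) :=
  duhInt0 hT (L1.integrable_coeFn G)

def DL (G : LX (TC T)) : LX (TC T) := (duhInt hT G).toL1 _

theorem DL_ae (G : LX (TC T)) : ∀ᵐ ξ, DL hT G ξ = duh hT ξ (G ξ) := (duhInt hT G).coeFn_toL1

theorem DL_norm (G : LX (TC T)) : ‖DL hT G‖ ≤ T ^ 2 * ‖G‖ := by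
  rw [L1.norm_eq_integral_norm, L1.norm_eq_integral_norm G, ← integral_const_mul]
  refine integral_mono_ae (L1.integrable_coeFn _).norm ((L1.integrable_coeFn G).norm.const_mul _) ?_
  filter_upwards [DL_ae hT G] with ξ h
  simp only [h]
  exact duh_norm hT ξ _

theorem DL_sub (G H : LX (TC T)) : DL hT (G - H) = DL hT G - DL hT H := by
  refine Lp.ext ?_
  filter_upwards [DL_ae hT G, DL_ae hT H, DL_ae hT (G - H), Lp.coeFn_sub G H,
    Lp.coeFn_sub (DL hT G) (DL hT H)] with ξ h1 h2 h3 h4 h5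
  rw [h3, h5, Pi.sub_apply, h1, h2, h4, Pi.sub_apply, duh_sub]

/-- fixed point -/
theorem exists_fix (S F : LX (TC T)) (j : ℕ) (r d : ℝ) (hd : 0 ≤ d) (hF : ‖F‖ + d ≤ r)
    (h1 : ‖S - F‖ + T ^ 2 * r ^ (j + 1) ≤ d) (h2 : T ^ 2 * ((j + 1) * r ^ j) ≤ 1 / 2) :
    ∃ V : LX (TC T), ‖V - F‖ ≤ d ∧ V = S + DL hT (cpow V j) := by
  have hball : ∀ V ∈ Metric.closedBall F d, ‖V‖ ≤ r := by
    intro V hV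
    rw [Metric.mem_closedBall, dist_eq_norm] at hV
    have : ‖V‖ ≤ ‖V - F‖ + ‖F‖ := by simpa using norm_add_le (V - F) F
    linarith
  let Φ : LX (TC T) → LX (TC T) := fun V => S + DL hT (cpow V j)
  have hmaps : Set.MapsTo Φ (Metric.closedBall F d) (Metric.closedBall F d) := by
    intro V hV
    rw [Metric.mem_closedBall, dist_eq_norm]
    have e : Φ V - F = (S - F) + DL hT (cpow V j) := by simp only [Φ]; abel
    rw [e]
    refine (norm_add_le _ _).trans (le_trans ?_ h1)
    gcongr
    exact (DL_norm hT _).trans (by gcongr; exact cpow_norm V (hball V hV) j)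
  have hcontr : ContractingWith (1/2 : NNReal) (hmaps.restrict Φ _ _) := by
    refine ⟨by
      rw [← NNReal.coe_lt_coe]; norm_num, LipschitzWith.of_dist_le_mul fun V W => ?_⟩
    rw [Subtype.dist_eq, Subtype.dist_eq, Set.MapsTo.val_restrict_apply,
      Set.MapsTo.val_restrict_apply, dist_eq_norm, dist_eq_norm]
    have e : Φ V.1 - Φ W.1 = DL hT (cpow V.1 j - cpow W.1 j) := by
      simp only [Φ]; rw [DL_sub]; abel
    rw [e]
    have h3 := cpow_sub V.1 W.1 (hball _ V.2) (hball _ W.2) j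
    calc _ ≤ T ^ 2 * ‖cpow V.1 j - cpow W.1 j‖ := DL_norm hT _
      _ ≤ T ^ 2 * ((j + 1) * r ^ j * ‖V.1 - W.1‖) := by gcongr
      _ = (T ^ 2 * ((j + 1) * r ^ j)) * ‖V.1 - W.1‖ := by ring
      _ ≤ (1/2) * ‖V.1 - W.1‖ := by gcongr
      _ = _ := by norm_num
  obtain ⟨V, hV, hfix, -⟩ := hcontr.exists_fixedPoint' Metric.isClosed_closedBall.isComplete hmaps
    (Metric.mem_closedBall_self hd) (edist_ne_top _ _)
  refine ⟨V, ?_, hfix.symm⟩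
  rwa [Metric.mem_closedBall, dist_eq_norm] at hV

end Duh
noncomputable section Sol
variable {T : ℝ} (hT : 0 ≤ T)

def lin (p : ℝ × ℂ × ℂ) : TC T :=
  ⟨fun t => (Real.cos (t * lam p.1) : ℂ) * p.2.1 +
    ((t * Real.sinc (t * lam p.1) : ℝ) : ℂ) * p.2.2, by
    have := Real.continuous_sinc
    fun_prop⟩

theorem lin_cont : Continuous (lin : ℝ × ℂ × ℂ → TC T) := by
  refine ContinuousMap.continuous_of_continuous_uncurry _ ?_
  have h1 := Real.continuous_sinc
  have h2 := lam_cont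
  simp only [lin, ContinuousMap.coe_mk, Function.uncurry_def]
  fun_prop

theorem abs_t_sinc {t : ℝ} (ht : t ∈ Set.Icc 0 T) (x : ℝ) : |t * Real.sinc x| ≤ T := by
  rw [abs_mul, abs_of_nonneg ht.1]
  have := Real.abs_sinc_le_one x
  have h := mul_le_mul_of_nonneg_left this ht.1
  linarith [ht.2]

theorem lin_norm {T : ℝ} (hT : 0 ≤ T) (p : ℝ × ℂ × ℂ) : ‖(lin p : TC T)‖ ≤ ‖p.2.1‖ + T * ‖p.2.2‖ := by
  refine (ContinuousMap.norm_le _ (by positivity)).2 fun t => ?_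
  refine (norm_add_le _ _).trans ?_
  rw [norm_mul, norm_mul, Complex.norm_real, Complex.norm_real, Real.norm_eq_abs, Real.norm_eq_abs]
  have h1 := Real.abs_cos_le_one (t * lam p.1)
  have h2 := abs_t_sinc t.2 (t * lam p.1)
  have := mul_le_mul_of_nonneg_right h1 (norm_nonneg p.2.1)
  have := mul_le_mul_of_nonneg_right h2 (norm_nonneg p.2.2)
  linarith

theorem linInt {T : ℝ} (hT : 0 ≤ T) {w₀ w₁ : ℝ → ℂ} (h0 : Integrable w₀) (h1 : Integrable w₁) :
    Integrable (fun ξ => (lin (ξ, w₀ ξ, w₁ ξ) : TC T)) := by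
  have hm : AEStronglyMeasurable (fun ξ => (lin (ξ, w₀ ξ, w₁ ξ) : TC T)) volume := by
    have h2 : AEStronglyMeasurable (fun ξ : ℝ => (ξ, w₀ ξ, w₁ ξ)) volume :=
      AEStronglyMeasurable.prodMk (f := fun ξ : ℝ => ξ) aestronglyMeasurable_id
        (h0.aestronglyMeasurable.prodMk h1.aestronglyMeasurable)
    exact Continuous.comp_aestronglyMeasurable (f := fun ξ : ℝ => (ξ, w₀ ξ, w₁ ξ)) lin_cont h2
  exact Integrable.mono' (g := fun ξ => ‖w₀ ξ‖ + T * ‖w₁ ξ‖) (h0.norm.add (h1.norm.const_mul T)) hm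
    (ae_of_all _ fun ξ => lin_norm hT _)

theorem lin_Shat (w₀ w₁ : ℝ → ℂ) (ξ : ℝ) (t : Set.Icc (0:ℝ) T) :
    (lin (ξ, w₀ ξ, w₁ ξ) : TC T) t = Shat t w₀ w₁ ξ := by
  simp [lin, Shat, mker_eq]

def evalC (t : Set.Icc (0:ℝ) T) : TC T →L[ℝ] ℂ := ContinuousMap.evalCLM ℝ t

theorem evalC_apply (t : Set.Icc (0:ℝ) T) (g : TC T) : evalC t g = g t := rfl

theorem cpow_eval (V : LX (TC T)) (j : ℕ) : ∀ᵐ ξ, ∀ t : Set.Icc (0:ℝ) T,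
    cpow V j ξ t = convList (List.replicate (j + 1) (fun ξ => V ξ t)) ξ := by
  induction j with
  | zero => exact ae_of_all _ fun ξ t => rfl
  | succ j ih =>
    filter_upwards [cv_ae V (cpow V j)] with ξ h t
    change cv V (cpow V j) ξ t = conv _ (convList (List.replicate (j + 1) (fun ξ => V ξ t))) ξ
    rw [h.2, ← evalC_apply, ← ContinuousLinearMap.integral_comp_comm _ h.1]
    unfold conv
    refine integral_congr_ae ?_
    filter_upwards [ae_sub_left ih ξ] with η hη
    rw [evalC_apply, ContinuousMap.mul_apply, hη t]

theorem isSol {w₀ w₁ : ℝ → ℂ} (h0 : Integrable w₀) (h1 : Integrable w₁) (j : ℕ) (V : LX (TC T))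
    (hV : V = (linInt hT h0 h1).toL1 _ + DL hT (cpow V j)) :
    IsGIBqSol (j + 1) T w₀ w₁ (fun t ξ => V ξ (Set.projIcc 0 T hT t)) := by
  have hVi := L1.integrable_coeFn V
  have hei : ∀ t : Set.Icc (0:ℝ) T, Integrable (fun ξ => V ξ t) := fun t =>
    (evalC t).integrable_comp hVi
  refine ⟨fun t _ => hei _, fun t₀ ht₀ => ?_, fun t ht => ?_⟩
  · simp only [eLpNorm_one_eq_lintegral_enorm]
    have := tendsto_lintegral_filter_of_dominated_convergence (μ := volume)
      (l := nhdsWithin t₀ (Set.Icc (0 : ℝ) T))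
      (F := fun t ξ => ‖V ξ (Set.projIcc 0 T hT t) - V ξ (Set.projIcc 0 T hT t₀)‖ₑ)
      (f := fun _ => 0) (fun ξ => 2 * ‖V ξ‖ₑ) ?_ ?_ ?_ ?_
    · simpa using this
    · refine Eventually.of_forall fun t => ?_
      have hm : ∀ t : Set.Icc (0:ℝ) T, StronglyMeasurable (fun ξ => V ξ t) := fun t =>
        (evalC t).continuous.comp_stronglyMeasurable (L1.stronglyMeasurable_coeFn V)
      exact ((hm _).sub (hm _)).enorm
    · refine Eventually.of_forall fun t => ae_of_all _ fun ξ => ?_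
      refine enorm_sub_le.trans ?_
      rw [two_mul]
      have hh : ∀ t, ‖V ξ t‖ₑ ≤ ‖V ξ‖ₑ := fun t => by
        rw [enorm_le_iff_norm_le]; exact (V ξ).norm_coe_le_norm t
      exact add_le_add (hh _) (hh _)
    · rw [lintegral_const_mul' _ _ (by simp)]
      exact ENNReal.mul_ne_top (by simp) hVi.2.ne
    · refine ae_of_all _ fun ξ => ?_
      have hc : Continuous fun t => ‖V ξ (Set.projIcc 0 T hT t) - V ξ (Set.projIcc 0 T hT t₀)‖ₑ := by
        have h2 : Continuous (Set.projIcc 0 T hT) := continuous_projIcc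
        fun_prop
      have := (hc.tendsto t₀).mono_left (nhdsWithin_le_nhds (s := Set.Icc 0 T))
      simpa using this
  · have e1 : ∀ᵐ ξ, V ξ = lin (ξ, w₀ ξ, w₁ ξ) + duh hT ξ (cpow V j ξ) := by
      have e2 : (V : ℝ → TC T) =ᵐ[volume] ((linInt hT h0 h1).toL1 _ + DL hT (cpow V j) : LX (TC T)) := by
        rw [← hV]
      filter_upwards [e2, Lp.coeFn_add ((linInt hT h0 h1).toL1 _) (DL hT (cpow V j)),
        (linInt hT h0 h1).coeFn_toL1, DL_ae hT (cpow V j)] with ξ a b c d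
      rw [a, b, Pi.add_apply, c, d]
    filter_upwards [e1, cpow_eval V j] with ξ a b
    have hp : Set.projIcc 0 T hT t = ⟨t, ht⟩ := Set.projIcc_of_mem hT ht
    rw [a, hp, ContinuousMap.add_apply, lin_Shat]
    congr 1
    unfold Ihat
    simp only [duh, ContinuousMap.coe_mk, duhI, List.ofFn_const]
    simp only [b]
end Sol
noncomputable section Low

/-- real convolution powers -/
def rpw (f : ℝ → ℝ) : ℕ → ℝ → ℝ
  | 0 => f
  | j + 1 => fun ξ => ∫ η, f η * rpw f j (ξ - η)

theorem rpw_nonneg {f : ℝ → ℝ} (hf : ∀ x, 0 ≤ f x) (j : ℕ) (x : ℝ) : 0 ≤ rpw f j x := by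
  induction j generalizing x with
  | zero => exact hf x
  | succ j ih => exact integral_nonneg fun η => mul_nonneg (hf _) (ih _)

theorem rpw_int {f : ℝ → ℝ} (hf : Integrable f) (j : ℕ) : Integrable (rpw f j) := by
  induction j with
  | zero => exact hf
  | succ j ih => exact hf.integrable_convolution (ContinuousLinearMap.mul ℝ ℝ) ih

theorem rpw_low {f : ℝ → ℝ} (hf0 : ∀ x, 0 ≤ f x) (hf : Integrable f) (N a R : ℝ) (hR : 0 ≤ R)
    (h1 : ∀ x ∈ Set.Icc N (N + 1), f x = R) (h2 : ∀ x ∈ Set.Icc a (a + 1), f x = R) (j : ℕ) :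
    R ^ (j + 1) ≤ ∫ ξ in Set.Icc (j * N + a) (j * N + a + j + 1), rpw f j ξ := by
  induction j with
  | zero =>
    simp only [Nat.cast_zero, zero_mul, zero_add, add_zero, pow_one, rpw]
    rw [setIntegral_congr_fun measurableSet_Icc h2]
    simp
  | succ j ih =>
    set g := (Set.Icc N (N + 1)).indicator f with hg
    set H := (Set.Icc (j * N + a) (j * N + a + j + 1)).indicator (rpw f j) with hH
    have gi : Integrable g := hf.indicator measurableSet_Icc
    have Hi : Integrable H := (rpw_int hf j).indicator measurableSet_Icc
    have g0 : ∀ x, g x ≤ f x := fun x => Set.indicator_le_self' (fun _ _ => hf0 _) x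
    have H0 : ∀ x, H x ≤ rpw f j x := fun x =>
      Set.indicator_le_self' (fun _ _ => rpw_nonneg hf0 _ _) x
    have g1 : ∀ x, 0 ≤ g x := fun x => Set.indicator_nonneg (fun _ _ => hf0 _) x
    have H1 : ∀ x, 0 ≤ H x := fun x => Set.indicator_nonneg (fun _ _ => rpw_nonneg hf0 _ _) x
    have e1 : ∫ x, g x = R := by
      rw [hg, integral_indicator measurableSet_Icc, setIntegral_congr_fun measurableSet_Icc h1]
      simp
    have hc := integral_convolution (ContinuousLinearMap.mul ℝ ℝ) (μ := volume) (ν := volume)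
      gi Hi
    simp only [ContinuousLinearMap.mul_apply', e1] at hc
    have hgH := gi.integrable_convolution (ContinuousLinearMap.mul ℝ ℝ) Hi
    have hsupp : ∀ ξ, ξ ∉ Set.Icc (((j + 1 : ℕ) : ℝ) * N + a)
        (((j + 1 : ℕ) : ℝ) * N + a + ((j + 1 : ℕ) : ℝ) + 1) →
        convolution g H (ContinuousLinearMap.mul ℝ ℝ) volume ξ = 0 := by
      intro ξ hξ
      refine integral_eq_zero_of_ae (ae_of_all _ fun η => ?_)
      simp only [ContinuousLinearMap.mul_apply', Pi.zero_apply]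
      by_contra hne
      have m1 := Set.mem_of_indicator_ne_zero (left_ne_zero_of_mul hne)
      have m2 := Set.mem_of_indicator_ne_zero (right_ne_zero_of_mul hne)
      refine hξ ⟨?_, ?_⟩
      · push_cast; linarith [m1.1, m2.1]
      · push_cast; linarith [m1.2, m2.2]
    rw [← integral_indicator measurableSet_Icc, ← hH] at ih
    calc R ^ (j + 1 + 1) = R * R ^ (j + 1) := by ring
      _ ≤ R * ∫ x, H x := by gcongr
      _ = ∫ ξ, convolution g H (ContinuousLinearMap.mul ℝ ℝ) volume ξ := hc.symm
      _ = ∫ ξ in Set.Icc (((j + 1 : ℕ) : ℝ) * N + a)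
        (((j + 1 : ℕ) : ℝ) * N + a + ((j + 1 : ℕ) : ℝ) + 1),
          convolution g H (ContinuousLinearMap.mul ℝ ℝ) volume ξ :=
          (setIntegral_eq_integral_of_forall_compl_eq_zero hsupp).symm
      _ ≤ _ := by
        refine setIntegral_mono_ae hgH.integrableOn (rpw_int hf (j+1)).integrableOn ?_
        filter_upwards [gi.ae_convolution_exists (ContinuousLinearMap.mul ℝ ℝ) Hi,
          hf.ae_convolution_exists (ContinuousLinearMap.mul ℝ ℝ) (rpw_int hf j)] with ξ a b
        exact integral_mono a b fun η => mul_le_mul (g0 _) (H0 _) (H1 _) (hf0 _)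

variable {T : ℝ} (hT : 0 ≤ T)

theorem constInt {f : ℝ → ℝ} (hf : Integrable f) : Integrable (fun ξ => f ξ • (1 : TC T)) :=
  hf.smul_const _

def cst {f : ℝ → ℝ} (hf : Integrable f) : LX (TC T) := (constInt hf).toL1 _

theorem cpow_cst {f : ℝ → ℝ} (hf : Integrable f) (j : ℕ) :
    ∀ᵐ ξ, cpow (cst hf : LX (TC T)) j ξ = rpw f j ξ • (1 : TC T) := by
  induction j with
  | zero => exact (constInt hf).coeFn_toL1
  | succ j ih =>
    filter_upwards [cv_ae (cst hf : LX (TC T)) (cpow (cst hf) j)] with ξ h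
    change cv (cst hf) (cpow (cst hf) j) ξ = (∫ η, f η * rpw f j (ξ - η)) • (1 : TC T)
    refine h.2.trans (Eq.trans ?_ (integral_smul_const (𝕜 := ℝ) (fun η => f η * rpw f j (ξ - η))
      (1 : TC T)))
    refine integral_congr_ae ?_
    filter_upwards [ae_sub_left ih ξ, (constInt (T := T) hf).coeFn_toL1] with η h1 h2
    have h3 : (cst hf : LX (TC T)) η = f η • (1 : TC T) := h2
    rw [h1, h3, smul_mul_smul_comm, mul_one]

theorem duh_one (ξ r : ℝ) : duh hT ξ (r • (1 : TC T)) ⟨T, hT, le_rfl⟩ =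
    ((r * (1 - Real.cos (T * lam ξ)) : ℝ) : ℂ) := by
  have h : ∫ t' in (0:ℝ)..T, Real.sin ((T - t') * lam ξ) * lam ξ = 1 - Real.cos (T * lam ξ) := by
    rw [intervalIntegral.integral_eq_sub_of_hasDerivAt (f := fun t' => Real.cos ((T - t') * lam ξ))]
    · simp
    · intro x _
      have := (((hasDerivAt_id x).const_sub T).mul_const (lam ξ)).cos
      convert! this using 1
      simp
    · apply Continuous.intervalIntegrable
      fun_prop
  simp only [duh, ContinuousMap.coe_mk, duhI, ContinuousMap.smul_apply, ContinuousMap.one_apply]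
  rw [mul_comm r, ← h, ← intervalIntegral.integral_mul_const, ← intervalIntegral.integral_ofReal]
  simp

theorem cos_low {T ξ : ℝ} (hT : 0 ≤ T) (hT1 : T ≤ 1) (hξ : 1 ≤ ξ) :
    T ^ 2 / 10 ≤ 1 - Real.cos (T * lam ξ) := by
  have h0 := lam_nonneg ξ
  have h1 := lam_le_one ξ
  have hpi := Real.pi_gt_three
  have h2 := Real.cos_le_one_sub_mul_cos_sq (x := T * lam ξ) (by
    rw [abs_of_nonneg (by positivity)]; nlinarith)
  have h3 : 1 / 2 ≤ lam ξ ^ 2 := by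
    rw [lam_sq, div_le_div_iff₀ (by norm_num) (one_add_sq_pos ξ)]; nlinarith
  have h4 : 1 / 5 ≤ 2 / Real.pi ^ 2 := by
    rw [div_le_div_iff₀ (by norm_num) (by positivity)]
    nlinarith [Real.pi_lt_d2]
  have h5 : T ^ 2 * (1/2) ≤ (T * lam ξ) ^ 2 := by
    rw [mul_pow]; gcongr
  have h6 : 1 / 5 * (T ^ 2 * (1/2)) ≤ 2 / Real.pi ^ 2 * (T * lam ξ) ^ 2 := by gcongr
  linarith

/-- the functional -/
def ell (E : Set ℝ) (G : LX (TC T)) : ℂ := ∫ ξ in E, G ξ ⟨T, hT, le_rfl⟩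

theorem evInt (G : LX (TC T)) (t : Set.Icc (0:ℝ) T) : Integrable (fun ξ => G ξ t) :=
  (evalC t).integrable_comp (L1.integrable_coeFn G)

theorem ell_norm (E : Set ℝ) (G : LX (TC T)) : ‖ell hT E G‖ ≤ ‖G‖ := by
  refine (norm_integral_le_integral_norm _).trans ?_
  rw [L1.norm_eq_integral_norm]
  refine (setIntegral_le_integral (evInt G _).norm (ae_of_all _ fun ξ => norm_nonneg _)).trans ?_
  exact integral_mono (evInt G _).norm (L1.integrable_coeFn G).norm
    fun ξ => (G ξ).norm_coe_le_norm _

theorem ell_add (E : Set ℝ) (G H : LX (TC T)) : ell hT E (G + H) = ell hT E G + ell hT E H := by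
  unfold ell
  rw [← integral_add (evInt G _).integrableOn (evInt H _).integrableOn]
  refine integral_congr_ae (ae_restrict_of_ae ?_)
  filter_upwards [Lp.coeFn_add G H] with ξ h
  rw [h, Pi.add_apply, ContinuousMap.add_apply]

theorem ell_low (hT1 : T ≤ 1) {f : ℝ → ℝ} (hf0 : ∀ x, 0 ≤ f x) (hf : Integrable f) (j : ℕ)
    (N a R : ℝ) (hR : 0 ≤ R) (ha : j * N + a = 1)
    (h1 : ∀ x ∈ Set.Icc N (N + 1), f x = R) (h2 : ∀ x ∈ Set.Icc a (a + 1), f x = R) :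
    T ^ 2 / 10 * R ^ (j + 1) ≤
      ‖ell hT (Set.Icc 1 (j + 2)) (DL hT (cpow (cst hf) j))‖ := by
  have hl := rpw_low hf0 hf N a R hR h1 h2 j
  rw [ha, show (1:ℝ) + j + 1 = j + 2 by ring] at hl
  have e : ell hT (Set.Icc 1 (j + 2)) (DL hT (cpow (cst hf) j)) =
      ((∫ ξ in Set.Icc (1:ℝ) (j + 2), rpw f j ξ * (1 - Real.cos (T * lam ξ)) : ℝ) : ℂ) := by
    rw [← integral_complex_ofReal]
    refine integral_congr_ae (ae_restrict_of_ae ?_)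
    filter_upwards [DL_ae hT (cpow (cst hf) j), cpow_cst (T := T) hf j] with ξ a b
    rw [a, b, duh_one]
  rw [e, Complex.norm_real, Real.norm_eq_abs]
  refine le_trans ?_ (le_abs_self _)
  calc T ^ 2 / 10 * R ^ (j + 1) ≤ T ^ 2 / 10 * ∫ ξ in Set.Icc (1:ℝ) (j + 2), rpw f j ξ := by gcongr
    _ = ∫ ξ in Set.Icc (1:ℝ) (j + 2), T ^ 2 / 10 * rpw f j ξ := (integral_const_mul _ _).symm
    _ ≤ _ := by
      refine setIntegral_mono_on ((rpw_int hf j).const_mul _).integrableOn ?_ measurableSet_Icc ?_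
      · refine Integrable.integrableOn ((rpw_int hf j).mul_bdd (c := 2) ?_ (ae_of_all _ fun ξ => ?_))
        · have := lam_cont
          exact Continuous.aestronglyMeasurable (by fun_prop)
        · rw [Real.norm_eq_abs, abs_le]
          constructor <;> linarith [Real.neg_one_le_cos (T * lam ξ), Real.cos_le_one (T * lam ξ)]
      · intro ξ hξ
        rw [mul_comm]
        exact mul_le_mul_of_nonneg_left (cos_low hT hT1 hξ.1) (rpw_nonneg hf0 _ _)

end Low
noncomputable section Core

theorem lin_sub_norm {T : ℝ} (hT : 0 ≤ T) (ξ : ℝ) (a b : ℂ) (r : ℝ) :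
    ‖(lin (ξ, a + r, b) : TC T) - r • (1 : TC T)‖ ≤ ‖a‖ + T * ‖b‖ + T ^ 2 * |r| := by
  have e : (lin (ξ, a + r, b) : TC T) - r • (1 : TC T) =
      lin (ξ, a, b) + (lin (ξ, (r : ℂ), 0) - r • (1 : TC T)) := by
    ext t
    simp [lin]
    ring
  rw [e]
  refine (norm_add_le _ _).trans (add_le_add (lin_norm hT _) ?_)
  refine (ContinuousMap.norm_le _ (by positivity)).2 fun t => ?_
  have e2 : ((lin (ξ, (r : ℂ), 0) : TC T) - r • (1 : TC T)) t = (((Real.cos (t * lam ξ) - 1) * r : ℝ) : ℂ) := by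
    simp [lin]
    ring
  rw [e2, Complex.norm_real, Real.norm_eq_abs, abs_mul]
  refine mul_le_mul_of_nonneg_right ?_ (abs_nonneg _)
  have h1 := Real.one_sub_sq_div_two_le_cos (x := t * lam ξ)
  have h2 := Real.cos_le_one (t * lam ξ)
  rw [abs_of_nonpos (by linarith)]
  have h3 : ((t : ℝ) * lam ξ) ^ 2 ≤ T ^ 2 := by
    have : (t:ℝ) * lam ξ ≤ T := by
      nlinarith [t.2.1, t.2.2, lam_nonneg ξ, lam_le_one ξ]
    have h0 : 0 ≤ (t:ℝ) * lam ξ := mul_nonneg t.2.1 (lam_nonneg ξ)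
    gcongr
  nlinarith [sq_nonneg T]

theorem core (j : ℕ) {T : ℝ} (hT : 0 ≤ T) (hT1 : T ≤ 1) {f : ℝ → ℝ} (hf0 : ∀ x, 0 ≤ f x)
    (hf : Integrable f) (N a R : ℝ) (hR : 1 ≤ R) (ha : j * N + a = 1)
    (h1 : ∀ x ∈ Set.Icc N (N + 1), f x = R) (h2 : ∀ x ∈ Set.Icc a (a + 1), f x = R)
    (hfi : ∫ x, f x ≤ 2 * R) (hfE : ∀ x ∈ Set.Icc (1:ℝ) (j + 2), f x = 0)
    {φ₀ φ₁ : ℝ → ℂ} (hφ₀ : Integrable φ₀) (hφ₁ : Integrable φ₁) (M : ℝ)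
    (hM : (∫ ξ, ‖φ₀ ξ‖) + ∫ ξ, ‖φ₁ ξ‖ = M)
    (η δ : ℝ) (hη0 : 0 < η) (hδ0 : 0 < δ) (hη : η * ((j + 1) * 3 ^ j) = 1 / 20)
    (hδ : δ * (2 + 3 ^ (j + 1)) = η / 2) (hTR : T ^ 2 * R ^ j = δ) (hMR : M ≤ η * R / 2)
    (hw : Integrable (fun ξ => φ₀ ξ + (f ξ : ℂ))) :
    ∃ v : ℝ → ℝ → ℂ, IsGIBqSol (j + 1) T (fun ξ => φ₀ ξ + (f ξ : ℂ)) φ₁ v ∧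
      δ * R / 20 - M ≤ ‖∫ ξ in Set.Icc (1:ℝ) (j + 2), v T ξ‖ := by
  have hj1 : (1:ℝ) ≤ (j + 1) * 3 ^ j := by
    have : (1:ℝ) ≤ 3 ^ j := one_le_pow₀ (by norm_num)
    have : (0:ℝ) ≤ j := Nat.cast_nonneg j
    nlinarith
  have hη1 : η ≤ 1 / 20 := by nlinarith
  have h3j : (0:ℝ) < 3 ^ (j+1) := by positivity
  have hδη : δ ≤ η := by nlinarith
  have hTδ : T ^ 2 ≤ δ := by
    have : 1 ≤ R ^ j := one_le_pow₀ hR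
    rw [← hTR]; nlinarith [sq_nonneg T]
  set S : LX (TC T) := (linInt hT hw hφ₁).toL1 _ with hS
  set F : LX (TC T) := cst hf with hF
  have hFn : ‖F‖ ≤ 2 * R := by
    rw [L1.norm_eq_integral_norm]
    refine le_trans ?_ hfi
    refine integral_mono_ae (L1.integrable_coeFn F).norm hf ?_
    filter_upwards [(constInt (T := T) hf).coeFn_toL1] with ξ h
    have h' : F ξ = f ξ • (1 : TC T) := h
    simp only [h']
    rw [norm_smul, Real.norm_of_nonneg (hf0 ξ)]
    have : ‖(1 : TC T)‖ ≤ 1 := (ContinuousMap.norm_le _ zero_le_one).2 fun t => by simp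
    nlinarith [hf0 ξ]
  have hSF : ‖S - F‖ ≤ M + T ^ 2 * (2 * R) := by
    rw [L1.norm_eq_integral_norm]
    calc ∫ ξ, ‖(S - F) ξ‖ ≤ ∫ ξ, (‖φ₀ ξ‖ + T * ‖φ₁ ξ‖ + T ^ 2 * f ξ) := by
          refine integral_mono_ae (L1.integrable_coeFn (S - F)).norm
            ((hφ₀.norm.add (hφ₁.norm.const_mul T)).add (hf.const_mul _)) ?_
          filter_upwards [(constInt (T := T) hf).coeFn_toL1, (linInt hT hw hφ₁).coeFn_toL1,
            Lp.coeFn_sub S F] with ξ a b c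
          have a' : F ξ = f ξ • (1 : TC T) := a
          have b' : S ξ = lin (ξ, φ₀ ξ + (f ξ : ℂ), φ₁ ξ) := b
          simp only [c, Pi.sub_apply, a', b']
          have := lin_sub_norm hT ξ (φ₀ ξ) (φ₁ ξ) (f ξ)
          rwa [abs_of_nonneg (hf0 ξ)] at this
      _ = (∫ ξ, ‖φ₀ ξ‖) + T * (∫ ξ, ‖φ₁ ξ‖) + T ^ 2 * ∫ ξ, f ξ := by
          have hi : Integrable (fun ξ => ‖φ₀ ξ‖ + T * ‖φ₁ ξ‖) :=
            hφ₀.norm.add (hφ₁.norm.const_mul T)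
          rw [integral_add hi (hf.const_mul _),
            integral_add hφ₀.norm (hφ₁.norm.const_mul T), integral_const_mul, integral_const_mul]
      _ ≤ _ := by
          have i1 : 0 ≤ ∫ ξ, ‖φ₁ ξ‖ := integral_nonneg fun _ => norm_nonneg _
          have := mul_le_mul_of_nonneg_left hfi (sq_nonneg T)
          nlinarith
  have hTRR : T ^ 2 * (3 * R) ^ (j + 1) = δ * 3 ^ (j + 1) * R := by
    rw [← hTR]; ring
  obtain ⟨V, hVF, hV⟩ := exists_fix hT S F j (3 * R) (η * R) (by positivity) (by nlinarith)
    (by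
      rw [hTRR]
      have : T ^ 2 * (2 * R) ≤ δ * (2 * R) := by gcongr
      have : δ * (2 + 3 ^ (j + 1)) * R = η / 2 * R := by rw [hδ]
      linarith)
    (by
      have : T ^ 2 * ((j + 1) * (3 * R) ^ j) = δ * ((j + 1) * 3 ^ j) := by rw [← hTR]; ring
      rw [this]
      have : δ * ((j + 1) * 3 ^ j) ≤ η * ((j + 1) * 3 ^ j) := by gcongr
      linarith)
  refine ⟨_, isSol hT hw hφ₁ j V hV, ?_⟩
  have hp : Set.projIcc 0 T hT T = ⟨T, hT, le_rfl⟩ := Set.projIcc_right hT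
  simp only [hp]
  change _ ≤ ‖ell hT (Set.Icc (1:ℝ) (j + 2)) V‖
  have hlow := ell_low hT hT1 hf0 hf j N a R (by linarith) ha h1 h2
  set E := Set.Icc (1:ℝ) (j + 2) with hE
  have hsplit : ell hT E V = ell hT E S + ell hT E (DL hT (cpow F j)) +
      ell hT E (DL hT (cpow V j - cpow F j)) := by
    rw [add_assoc, ← ell_add, DL_sub, add_sub_cancel, ← ell_add, ← hV]
  have hb1 : ‖ell hT E S‖ ≤ M := by
    refine (norm_integral_le_integral_norm _).trans ?_
    calc ∫ ξ in E, ‖S ξ ⟨T, hT, le_rfl⟩‖ ≤ ∫ ξ in E, (‖φ₀ ξ‖ + T * ‖φ₁ ξ‖) := by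
          refine integral_mono_ae (evInt S _).norm.integrableOn
            (hφ₀.norm.add (hφ₁.norm.const_mul T)).integrableOn ?_
          filter_upwards [ae_restrict_of_ae (linInt hT hw hφ₁).coeFn_toL1,
            ae_restrict_mem measurableSet_Icc] with ξ b hξ
          have b' : S ξ = lin (ξ, φ₀ ξ + (f ξ : ℂ), φ₁ ξ) := b
          simp only [b']
          refine (ContinuousMap.norm_coe_le_norm _ _).trans ((lin_norm hT _).trans ?_)
          simp [hfE ξ hξ]
      _ ≤ ∫ ξ, (‖φ₀ ξ‖ + T * ‖φ₁ ξ‖) := by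
          refine setIntegral_le_integral (hφ₀.norm.add (hφ₁.norm.const_mul T))
            (ae_of_all _ fun ξ => ?_)
          simp only [Pi.zero_apply]; positivity
      _ = (∫ ξ, ‖φ₀ ξ‖) + T * (∫ ξ, ‖φ₁ ξ‖) := by
          rw [integral_add hφ₀.norm (hφ₁.norm.const_mul T), integral_const_mul]
      _ ≤ M := by
          have i1 : 0 ≤ ∫ ξ, ‖φ₁ ξ‖ := integral_nonneg fun _ => norm_nonneg _
          nlinarith
  have hb2 : ‖ell hT E (DL hT (cpow V j - cpow F j))‖ ≤ δ * R / 20 := by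
    refine (ell_norm hT E _).trans ((DL_norm hT _).trans ?_)
    have hVn : ‖V‖ ≤ 3 * R := by
      have : ‖V‖ ≤ ‖V - F‖ + ‖F‖ := by simpa using norm_add_le (V - F) F
      nlinarith
    have h := cpow_sub V F hVn (by linarith) j
    calc _ ≤ T ^ 2 * ((j + 1) * (3 * R) ^ j * (η * R)) := by
          refine mul_le_mul_of_nonneg_left (h.trans ?_) (sq_nonneg T)
          gcongr
      _ = (T ^ 2 * R ^ j) * (η * ((j + 1) * 3 ^ j)) * R := by ring
      _ = _ := by rw [hTR, hη]; ring
  have hlow' : δ * R / 10 ≤ ‖ell hT E (DL hT (cpow F j))‖ := by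
    refine le_trans (le_of_eq ?_) hlow
    rw [← hTR]; ring
  rw [hsplit]
  have t1 := norm_sub_le (ell hT E S + ell hT E (DL hT (cpow F j)) +
      ell hT E (DL hT (cpow V j - cpow F j))) (ell hT E S + ell hT E (DL hT (cpow V j - cpow F j)))
  have t2 := norm_add_le (ell hT E S) (ell hT E (DL hT (cpow V j - cpow F j)))
  have t3 : ell hT E S + ell hT E (DL hT (cpow F j)) +
      ell hT E (DL hT (cpow V j - cpow F j)) - (ell hT E S + ell hT E (DL hT (cpow V j - cpow F j)))
      = ell hT E (DL hT (cpow F j)) := by ring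
  rw [t3] at t1
  linarith

end Core
noncomputable section FinalSec

theorem jbw_pos (s ξ : ℝ) : 0 < jbw s ξ := Real.rpow_pos_of_pos (one_add_sq_pos ξ) _

theorem jbw_cont (s : ℝ) : Continuous (jbw s) := by
  unfold jbw
  exact Continuous.rpow_const (by fun_prop) fun ξ => Or.inl (one_add_sq_pos ξ).ne'

theorem FLnorm_eq (s : ℝ) (w : ℝ → ℂ) :
    FLnorm s 2 w = eLpNorm (fun ξ => (jbw s ξ : ℂ) * w ξ) 2 volume := by
  refine eLpNorm_congr_norm_ae (ae_of_all _ fun ξ => ?_)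
  simp

theorem exists_approx (s : ℝ) (v : ℝ → ℂ) (hm : Measurable v) (hv : FLnorm s 2 v < ⊤) (δ : ℝ≥0∞)
    (hδ : δ ≠ 0) : ∃ φ : ℝ → ℂ, Integrable φ ∧ Measurable φ ∧ FLnorm s 2 (fun ξ => φ ξ - v ξ) ≤ δ := by
  have hjm : Continuous fun ξ => (jbw s ξ : ℂ) := Complex.continuous_ofReal.comp (jbw_cont s)
  have hmem : MemLp (fun ξ => (jbw s ξ : ℂ) * v ξ) 2 volume := by
    refine ⟨(hjm.measurable.mul hm).aestronglyMeasurable, ?_⟩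
    rwa [← FLnorm_eq]
  obtain ⟨g, hgc, hg, hgcont, -⟩ := hmem.exists_hasCompactSupport_eLpNorm_sub_le (by simp) hδ
  have hne : ∀ ξ, (jbw s ξ : ℂ) ≠ 0 := fun ξ => by exact_mod_cast (jbw_pos s ξ).ne'
  have hc : Continuous fun ξ => (jbw s ξ : ℂ)⁻¹ * g ξ := (hjm.inv₀ hne).mul hgcont
  refine ⟨fun ξ => (jbw s ξ : ℂ)⁻¹ * g ξ, hc.integrable_of_hasCompactSupport hgc.mul_left,
    hc.measurable, ?_⟩
  rw [FLnorm_eq]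
  refine le_trans (le_of_eq ?_) hg
  rw [← eLpNorm_neg]
  congr 1
  ext ξ
  simp only [Pi.neg_apply, Pi.sub_apply]
  field_simp [hne ξ]
  ring

theorem exists_low (σ b : ℝ) : ∃ C : ℝ, 0 < C ∧ ∀ u : ℝ → ℂ, AEStronglyMeasurable u volume →
    ENNReal.ofReal ‖∫ ξ in Set.Icc 1 b, u ξ‖ ≤ ENNReal.ofReal C * FLnorm σ 2 u := by
  obtain ⟨C₀, hC₀⟩ := (isCompact_Icc (a := (1:ℝ)) (b := b)).exists_bound_of_continuousOn
    ((jbw_cont σ).inv₀ fun ξ => (jbw_pos σ ξ).ne').continuousOn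
  set C₁ := max C₀ 1
  have hC₁ : 0 < C₁ := lt_max_of_lt_right one_pos
  set m : ℝ := (volume (Set.Icc 1 b)).toReal ^ (1/2 : ℝ) + 1 with hm
  have hm0 : 0 ≤ (volume (Set.Icc 1 b)).toReal ^ (1/2 : ℝ) := by positivity
  refine ⟨C₁ * m, by positivity, fun u hu => ?_⟩
  calc ENNReal.ofReal ‖∫ ξ in Set.Icc 1 b, u ξ‖ = ‖∫ ξ in Set.Icc 1 b, u ξ‖ₑ := ofReal_norm _
    _ ≤ ∫⁻ ξ in Set.Icc 1 b, ‖u ξ‖ₑ := enorm_integral_le_lintegral_enorm _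
    _ = eLpNorm u 1 (volume.restrict (Set.Icc 1 b)) := eLpNorm_one_eq_lintegral_enorm.symm
    _ ≤ eLpNorm u 2 (volume.restrict (Set.Icc 1 b)) *
        (volume.restrict (Set.Icc 1 b)) Set.univ ^ (1 / (1:ℝ≥0∞).toReal - 1 / (2:ℝ≥0∞).toReal) :=
        eLpNorm_le_eLpNorm_mul_rpow_measure_univ (by norm_num) hu.restrict
    _ ≤ (ENNReal.ofReal C₁ * FLnorm σ 2 u) * ENNReal.ofReal m := by
        refine mul_le_mul' ?_ ?_
        · calc eLpNorm u 2 (volume.restrict (Set.Icc 1 b))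
              ≤ ENNReal.ofReal C₁ * eLpNorm (fun ξ => jbw σ ξ * ‖u ξ‖) 2
                (volume.restrict (Set.Icc 1 b)) := by
                refine eLpNorm_le_mul_eLpNorm_of_ae_le_mul ?_ 2
                filter_upwards [ae_restrict_mem measurableSet_Icc] with ξ hξ
                have h1 := hC₀ ξ hξ
                have hj := jbw_pos σ ξ
                rw [Pi.inv_apply, norm_inv, Real.norm_of_nonneg hj.le] at h1
                have h2 : (jbw σ ξ)⁻¹ ≤ C₁ := h1.trans (le_max_left _ _)
                rw [norm_mul, norm_norm, Real.norm_of_nonneg hj.le, ← mul_assoc]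
                have h3 : 1 ≤ C₁ * jbw σ ξ := by
                  rwa [inv_le_iff_one_le_mul₀ hj] at h2
                nlinarith [norm_nonneg (u ξ)]
            _ ≤ _ := by
                gcongr
                exact eLpNorm_restrict_le _ _ _ _
        · have hv : volume (Set.Icc 1 b) ≠ ⊤ := isCompact_Icc.measure_lt_top.ne
          rw [Measure.restrict_apply_univ]
          have e : (1 / (1:ℝ≥0∞).toReal - 1 / (2:ℝ≥0∞).toReal) = 1/2 := by norm_num
          rw [e, ← ENNReal.ofReal_toReal hv, ENNReal.ofReal_rpow_of_nonneg (by positivity) (by norm_num)]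
          refine ENNReal.ofReal_le_ofReal ?_
          linarith
    _ = _ := by rw [ENNReal.ofReal_mul hC₁.le]; ring

theorem exists_N (s : ℝ) (hs : s < 0) (R δ B : ℝ) (hδ : 0 < δ) :
    ∃ N, B ≤ N ∧ R * (1 + (N - 2) ^ 2) ^ (s / 2) ≤ δ := by
  have h1 : Tendsto (fun N : ℝ => 1 + (N - 2) ^ 2) atTop atTop := by
    refine tendsto_atTop_add_const_left _ _ ?_
    exact (tendsto_pow_atTop two_ne_zero).comp (tendsto_atTop_add_const_right _ (-2) tendsto_id)
  have h2 := (tendsto_rpow_neg_atTop (y := -(s/2)) (by linarith)).comp h1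
  have h3 := h2.const_mul R
  simp only [neg_neg, mul_zero, Function.comp_def] at h3
  obtain ⟨N, ha, hb⟩ := ((h3.eventually (gt_mem_nhds hδ)).and (eventually_ge_atTop B)).exists
  exact ⟨N, hb, ha.le⟩

def KK (j : ℕ) (N : ℝ) : Set ℝ := Set.Icc N (N + 1) ∪ Set.Icc (1 - j * N) (1 - j * N + 1)

theorem KK_meas (j : ℕ) (N : ℝ) : MeasurableSet (KK j N) := measurableSet_Icc.union measurableSet_Icc

theorem KK_vol (j : ℕ) (N : ℝ) : volume (KK j N) ≤ 2 := by
  refine (measure_union_le _ _).trans ?_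
  rw [Real.volume_Icc, Real.volume_Icc]
  simp only [add_sub_cancel_left, ENNReal.ofReal_one]
  norm_num

def ff (j : ℕ) (N R : ℝ) : ℝ → ℝ := (KK j N).indicator fun _ => R

theorem ff_int (j : ℕ) (N R : ℝ) : Integrable (ff j N R) :=
  (integrable_indicator_iff (KK_meas j N)).2
    (integrableOn_const ((KK_vol j N).trans_lt (by simp)).ne)

theorem ff_norm (j : ℕ) (hj : 1 ≤ j) (N R s : ℝ) (hN : 3 ≤ N) (hR : 0 ≤ R) (hs : s < 0) :
    FLnorm s 2 (fun ξ => (ff j N R ξ : ℂ)) ≤ ENNReal.ofReal (R * (1 + (N - 2) ^ 2) ^ (s / 2)) * 2 := by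
  set c := R * (1 + (N - 2) ^ 2) ^ (s / 2) with hc
  have hc0 : 0 ≤ c := mul_nonneg hR (Real.rpow_nonneg (by positivity) _)
  have hj' : (1:ℝ) ≤ j := by exact_mod_cast hj
  calc FLnorm s 2 (fun ξ => (ff j N R ξ : ℂ))
      ≤ eLpNorm ((KK j N).indicator fun _ => c) 2 volume := by
        refine eLpNorm_mono_real fun ξ => ?_
        rw [norm_mul, norm_norm, Complex.norm_real, Real.norm_of_nonneg (jbw_pos s ξ).le]
        unfold ff
        by_cases hξ : ξ ∈ KK j N
        · rw [Set.indicator_of_mem hξ, Set.indicator_of_mem hξ, Real.norm_of_nonneg hR, mul_comm, hc]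
          refine mul_le_mul_of_nonneg_left ?_ hR
          unfold jbw
          refine Real.rpow_le_rpow_of_nonpos (by positivity) ?_ (by linarith)
          rcases hξ with h | h
          · nlinarith [h.1]
          · have : ξ ≤ 2 - N := by nlinarith [h.2]
            nlinarith
        · rw [Set.indicator_of_notMem hξ, Set.indicator_of_notMem hξ]; simp
    _ = ‖c‖ₑ * volume (KK j N) ^ (1 / (2:ℝ≥0∞).toReal) :=
        eLpNorm_indicator_const (KK_meas j N) (by simp) (by simp)
    _ ≤ ENNReal.ofReal c * 2 := by
        rw [Real.enorm_of_nonneg hc0]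
        gcongr
        calc volume (KK j N) ^ (1 / (2:ℝ≥0∞).toReal) ≤ 2 ^ (1 / (2:ℝ≥0∞).toReal) := by
              gcongr
              exact KK_vol j N
          _ ≤ 2 ^ (1:ℝ) := ENNReal.rpow_le_rpow_of_exponent_le (by norm_num) (by norm_num)
          _ = 2 := by simp

end FinalSec

/-- Norm inflation with infinite loss of regularity at general initial data in `H^s`
for the generalized improved Boussinesq equation. -/
theorem norm_inflation_infinite_loss_of_regularity_Hs
    (k : ℕ) (hk : 2 ≤ k) (σ s : ℝ) (hs : s < 0)
    (v₀ v₁ : ℝ → ℂ) (hv₀m : Measurable v₀) (hv₁m : Measurable v₁)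
    (hv₀ : FLnorm s 2 v₀ < ⊤) (hv₁ : FLnorm s 2 v₁ < ⊤) :
    ∀ ε : ℝ, 0 < ε →
      ∃ T : ℝ, T ∈ Set.Ioo 0 ε ∧
        ∃ w₀ w₁ : ℝ → ℂ, Integrable w₀ ∧ Integrable w₁ ∧
          ∃ v : ℝ → ℝ → ℂ, IsGIBqSol k T w₀ w₁ v ∧
            FLnorm s 2 (fun ξ => w₀ ξ - v₀ ξ) + FLnorm s 2 (fun ξ => w₁ ξ - v₁ ξ)
                < ENNReal.ofReal ε ∧
            ENNReal.ofReal ε⁻¹ < FLnorm σ 2 (v T) := by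
  intro ε hε
  obtain ⟨j, rfl⟩ : ∃ j, k = j + 1 := ⟨k - 1, by omega⟩
  have hj : 1 ≤ j := by omega
  obtain ⟨φ₀, hφ₀, -, ha₀⟩ := exists_approx s v₀ hv₀m hv₀ (ENNReal.ofReal (ε / 8)) (by simp [hε])
  obtain ⟨φ₁, hφ₁, -, ha₁⟩ := exists_approx s v₁ hv₁m hv₁ (ENNReal.ofReal (ε / 8)) (by simp [hε])
  obtain ⟨C, hC, hlow⟩ := exists_low σ (j + 2)
  obtain ⟨M, hM⟩ : ∃ M, (∫ ξ, ‖φ₀ ξ‖) + ∫ ξ, ‖φ₁ ξ‖ = M := ⟨_, rfl⟩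
  obtain ⟨η, hη0, hη⟩ : ∃ η : ℝ, 0 < η ∧ η * ((j + 1) * 3 ^ j) = 1 / 20 :=
    ⟨1 / (20 * ((j + 1) * 3 ^ j)), by positivity, by field_simp⟩
  obtain ⟨δ, hδ0, hδ⟩ : ∃ δ : ℝ, 0 < δ ∧ δ * (2 + 3 ^ (j + 1)) = η / 2 :=
    ⟨η / (2 * (2 + 3 ^ (j + 1))), by positivity, by field_simp⟩
  set ρ := min 1 (ε / 2) with hρ
  have hρ0 : 0 < ρ := lt_min one_pos (by linarith)
  -- choose R
  obtain ⟨R, hR1, hR2, hR3, hR4⟩ : ∃ R : ℝ, 1 ≤ R ∧ M ≤ η * R / 2 ∧ C * ε⁻¹ < δ * R / 20 - M ∧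
      δ ≤ ρ ^ 2 * R := by
    refine ((eventually_ge_atTop (1:ℝ)).and ((eventually_ge_atTop (2 * M / η)).and
      ((eventually_gt_atTop ((C * ε⁻¹ + M) * 20 / δ)).and
        (eventually_ge_atTop (δ / ρ ^ 2))))).exists.imp ?_
    rintro R ⟨a, b, c, d⟩
    rw [div_le_iff₀ hη0] at b
    rw [div_lt_iff₀ hδ0] at c
    rw [div_le_iff₀ (by positivity)] at d
    exact ⟨a, by linarith, by linarith, by linarith⟩
  have hR0 : 0 < R := by linarith
  obtain ⟨T, hT0, hTρ, hTR⟩ : ∃ T : ℝ, 0 < T ∧ T ≤ ρ ∧ T ^ 2 * R ^ j = δ := by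
    have hq : 0 < δ / R ^ j := by positivity
    refine ⟨Real.sqrt (δ / R ^ j), Real.sqrt_pos.2 hq, ?_, ?_⟩
    · refine Real.sqrt_le_iff.2 ⟨hρ0.le, ?_⟩
      rw [div_le_iff₀ (by positivity)]
      have : R ≤ R ^ j := le_self_pow₀ hR1 (by omega)
      nlinarith [sq_nonneg ρ]
    · rw [Real.sq_sqrt hq.le]; field_simp
  obtain ⟨N, hN, hNs⟩ := exists_N s hs R (ε / 8) (j + 3) (by linarith)
  have hj' : (1:ℝ) ≤ j := by exact_mod_cast hj
  have hff0 : ∀ x, 0 ≤ ff j N R x := fun x => Set.indicator_nonneg (fun _ _ => hR0.le) x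
  have hw : Integrable (fun ξ => φ₀ ξ + (ff j N R ξ : ℂ)) := hφ₀.add (ff_int j N R).ofReal
  obtain ⟨v, hv, hvl⟩ := core j hT0.le (hTρ.trans (min_le_left _ _)) hff0 (ff_int j N R) N
    (1 - j * N) R hR1 (by ring)
    (fun x hx => Set.indicator_of_mem (s := KK j N) (show x ∈ KK j N from Or.inl hx) _) (fun x hx => Set.indicator_of_mem (s := KK j N) (show x ∈ KK j N from Or.inr hx) _)
    (by
      unfold ff
      rw [integral_indicator (KK_meas j N), setIntegral_const, smul_eq_mul]
      refine mul_le_mul_of_nonneg_right ?_ hR0.le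
      exact ENNReal.toReal_le_of_le_ofReal (by norm_num) (by simpa using KK_vol j N))
    (fun x hx => Set.indicator_of_notMem (s := KK j N) (show x ∉ KK j N from fun h => by
      rcases h with h | h
      · linarith [h.1, hx.2]
      · have := h.2
        have := hx.1
        nlinarith) _)
    hφ₀ hφ₁ M hM η δ hη0 hδ0 hη hδ hTR hR2 hw
  refine ⟨T, ⟨hT0, ?_⟩, _, φ₁, hw, hφ₁, v, hv, ?_, ?_⟩
  · have := hTρ.trans (min_le_right _ _)
    linarith
  · have hjm : Continuous fun ξ => (jbw s ξ : ℂ) := Complex.continuous_ofReal.comp (jbw_cont s)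
    have hd : FLnorm s 2 (fun ξ => φ₀ ξ + (ff j N R ξ : ℂ) - v₀ ξ) ≤
        FLnorm s 2 (fun ξ => φ₀ ξ - v₀ ξ) + FLnorm s 2 (fun ξ => (ff j N R ξ : ℂ)) := by
      simp only [FLnorm_eq]
      refine le_trans (le_of_eq ?_) (eLpNorm_add_le ?_ ?_ (by norm_num))
      · congr 1
        ext ξ
        simp only [Pi.add_apply]
        ring
      · exact hjm.aestronglyMeasurable.mul
          (hφ₀.aestronglyMeasurable.sub hv₀m.aestronglyMeasurable)
      · exact hjm.aestronglyMeasurable.mul (ff_int j N R).ofReal.aestronglyMeasurable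
    have hfn := ff_norm j hj N R s (by linarith) hR0.le hs
    have hfn' : FLnorm s 2 (fun ξ => (ff j N R ξ : ℂ)) ≤ ENNReal.ofReal (ε / 4) := by
      refine hfn.trans ?_
      calc _ ≤ ENNReal.ofReal (ε / 8) * 2 := by gcongr
        _ = ENNReal.ofReal (ε / 8) * ENNReal.ofReal 2 := by simp
        _ = ENNReal.ofReal (ε / 4) := by
          rw [← ENNReal.ofReal_mul (by linarith)]; congr 1; ring
    calc _ ≤ (ENNReal.ofReal (ε / 8) + ENNReal.ofReal (ε / 4)) + ENNReal.ofReal (ε / 8) :=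
          add_le_add (hd.trans (add_le_add ha₀ hfn')) ha₁
      _ = ENNReal.ofReal (ε / 2) := by
          rw [← ENNReal.ofReal_add (by linarith) (by linarith),
            ← ENNReal.ofReal_add (by linarith) (by linarith)]
          congr 1; ring
      _ < _ := (ENNReal.ofReal_lt_ofReal_iff hε).2 (by linarith)
  · have h1 := hlow (v T) (hv.1 T ⟨hT0.le, le_rfl⟩).aestronglyMeasurable
    have h2 : ENNReal.ofReal (C * ε⁻¹) < ENNReal.ofReal C * FLnorm σ 2 (v T) := by
      refine lt_of_lt_of_le ?_ h1
      have : 0 < C * ε⁻¹ := by positivity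
      exact (ENNReal.ofReal_lt_ofReal_iff (by linarith)).2 (by linarith)
    rw [ENNReal.ofReal_mul hC.le] at h2
    exact lt_of_mul_lt_mul_left' h2
end

section
/- Local well-posedness of gIBq in the Wiener algebra FL¹: let k ≥ 2 be an integer. There exists c > 0, depending only on k, such that for every M > 0, every T with 0 < T ≤ 1 and T²·M^{k−1} ≤ c, and all v₀, v₁ ∈ L¹(ℝ) with ‖v₀‖_{L¹(ℝ)} + ‖v₁‖_{L¹(ℝ)} ≤ M, there exists a Fourier-side solution v : [0, T] → L¹(ℝ) of gIBq with nonlinearity u^k and data (v₀, v₁) satisfying sup_{0 ≤ t ≤ T} ‖v(t)‖_{L¹(ℝ)} ≤ 2M; moreover v is the unique such solution among continuous maps w : [0, T] → L¹(ℝ) with sup_{0 ≤ t ≤ T} ‖w(t)‖_{L¹(ℝ)} ≤ 2M. -/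
open MeasureTheory Filter
open scoped ENNReal

theorem exists_rep (e : ℝ → (ℝ →₁[volume] ℂ)) (he : Continuous e) :
    ∃ W : ℝ → ℝ → ℂ, StronglyMeasurable (Function.uncurry W) ∧ ∀ t, W t =ᵐ[volume] e t := by
  have hint : ∀ t, Integrable (e t) := fun t => L1.integrable_coeFn (e t)
  let P : ℝ → ℝ → ℂ := fun t ξ => ∫ x in (0:ℝ)..ξ, e t x
  have hP : StronglyMeasurable (Function.uncurry P) := by
    apply stronglyMeasurable_uncurry_of_continuous_of_stronglyMeasurable
    · intro ξ
      have hset : ∀ a b : ℝ, Continuous fun t => ∫ x in Set.Ioc a b, e t x := by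
        intro a b
        exact (continuous_setIntegral (Set.Ioc a b)).comp he
      exact (hset _ _).sub (hset _ _)
    · intro t
      exact ((hint t).continuous_primitive 0).stronglyMeasurable
  let F : ℕ → ℝ × ℝ → ℂ := fun n p =>
    (((n:ℝ) + 1 : ℝ)) • (P p.1 (p.2 + 1 / ((n:ℝ) + 1)) - P p.1 p.2)
  have hF : ∀ n, StronglyMeasurable (F n) := by
    intro n
    have h1 : StronglyMeasurable fun p : ℝ × ℝ => P p.1 (p.2 + 1 / ((n:ℝ) + 1)) :=
      hP.comp_measurable (g := fun p : ℝ × ℝ => (p.1, p.2 + 1 / ((n:ℝ) + 1))) (by fun_prop)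
    exact (h1.sub hP).const_smul ((n:ℝ) + 1)
  refine ⟨fun t ξ => limUnder atTop (fun n => F n (t, ξ)), ?_, ?_⟩
  · exact StronglyMeasurable.limUnder hF
  · intro t
    filter_upwards [LocallyIntegrable.ae_hasDerivAt_integral (hint t).locallyIntegrable] with ξ hξ
    have h := (hξ 0).tendsto_slope_zero
    have h2 : Tendsto (fun n : ℕ => 1 / ((n:ℝ) + 1)) atTop (nhdsWithin 0 {0}ᶜ) := by
      apply tendsto_nhdsWithin_of_tendsto_nhds_of_eventually_within
      · exact tendsto_one_div_add_atTop_nhds_zero_nat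
      · refine Eventually.of_forall fun n => ?_
        have : (0:ℝ) < 1 / ((n:ℝ) + 1) := by positivity
        exact this.ne'
    have h3 := h.comp h2
    apply Tendsto.limUnder_eq
    refine h3.congr fun n => ?_
    simp [F, P]

theorem conv_eq (f g : ℝ → ℂ) :
    conv f g = MeasureTheory.convolution f g (ContinuousLinearMap.mul ℂ ℂ) volume := by
  ext x; rfl

theorem conv_integrable {f g : ℝ → ℂ} (hf : Integrable f) (hg : Integrable g) :
    Integrable (conv f g) := by
  rw [conv_eq]; exact hf.integrable_convolution _ hg

theorem conv_exists {f g : ℝ → ℂ} (hf : Integrable f) (hg : Integrable g) :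
    ∀ᵐ ξ, Integrable (fun η => f η * g (ξ - η)) :=
  hf.ae_convolution_exists (ContinuousLinearMap.mul ℂ ℂ) hg

theorem conv_norm {f g : ℝ → ℂ} (hf : Integrable f) (hg : Integrable g) :
    ∫ ξ, ‖conv f g ξ‖ ≤ (∫ ξ, ‖f ξ‖) * ∫ ξ, ‖g ξ‖ := by
  have h := integral_convolution (ContinuousLinearMap.mul ℝ ℝ) (μ := volume) (ν := volume)
    hf.norm hg.norm
  simp only [ContinuousLinearMap.mul_apply'] at h
  rw [← h]
  apply integral_mono (conv_integrable hf hg).norm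
    (hf.norm.integrable_convolution _ hg.norm)
  intro ξ
  refine (norm_integral_le_integral_norm _).trans (le_of_eq ?_)
  simp [MeasureTheory.convolution]

theorem conv_congr {f f' g g' : ℝ → ℂ} (hf : f =ᵐ[volume] f') (hg : g =ᵐ[volume] g') :
    conv f g = conv f' g' := by
  ext ξ
  apply integral_congr_ae
  have h2 := (Measure.measurePreserving_sub_left volume ξ).quasiMeasurePreserving.ae_eq_comp hg
  filter_upwards [hf, h2] with η h1 h2
  simp only [Function.comp] at h2
  rw [h1, h2]

/-- `(n+1)`-fold convolution power. -/
noncomputable def pw (f : ℝ → ℂ) : ℕ → ℝ → ℂ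
  | 0 => f
  | n + 1 => conv f (pw f n)

theorem convList_ofFn (n : ℕ) (f : ℝ → ℂ) :
    convList (List.ofFn fun _ : Fin (n + 1) => f) = pw f n := by
  induction n with
  | zero => simp [convList, pw]
  | succ n ih =>
    rw [List.ofFn_succ] at ih ⊢
    rw [List.ofFn_succ]
    rw [convList, ih, pw]

theorem pw_integrable {f : ℝ → ℂ} (hf : Integrable f) (n : ℕ) : Integrable (pw f n) := by
  induction n with
  | zero => exact hf
  | succ n ih => exact conv_integrable hf ih

theorem pw_congr {f g : ℝ → ℂ} (h : f =ᵐ[volume] g) (n : ℕ) : pw f n =ᵐ[volume] pw g n := by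
  induction n with
  | zero => exact h
  | succ n ih => rw [pw, pw, conv_congr h ih]

theorem pw_congr' {f g : ℝ → ℂ} (h : f =ᵐ[volume] g) (n : ℕ) : pw f (n + 1) = pw g (n + 1) := by
  rw [pw, pw, conv_congr h (pw_congr h n)]

theorem pw_norm {f : ℝ → ℂ} (hf : Integrable f) {R : ℝ} (hR : ∫ ξ, ‖f ξ‖ ≤ R) (n : ℕ) :
    ∫ ξ, ‖pw f n ξ‖ ≤ R ^ (n + 1) := by
  have h0 : 0 ≤ ∫ ξ, ‖f ξ‖ := integral_nonneg fun _ => norm_nonneg _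
  induction n with
  | zero => simpa [pw] using hR
  | succ n ih =>
    rw [pw, pow_succ']
    exact (conv_norm hf (pw_integrable hf n)).trans
      (mul_le_mul hR ih (integral_nonneg fun _ => norm_nonneg _) (h0.trans hR))

theorem pw_diff {f g : ℝ → ℂ} (hf : Integrable f) (hg : Integrable g) {R : ℝ}
    (hfR : ∫ ξ, ‖f ξ‖ ≤ R) (hgR : ∫ ξ, ‖g ξ‖ ≤ R) (n : ℕ) :
    ∫ ξ, ‖pw f n ξ - pw g n ξ‖ ≤ (n + 1) * R ^ n * ∫ ξ, ‖f ξ - g ξ‖ := by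
  have h0 : 0 ≤ ∫ ξ, ‖f ξ‖ := integral_nonneg fun _ => norm_nonneg _
  have hR0 : 0 ≤ R := h0.trans hfR
  have hd0 : 0 ≤ ∫ ξ, ‖f ξ - g ξ‖ := integral_nonneg fun _ => norm_nonneg _
  induction n with
  | zero => simp [pw]
  | succ n ih =>
    have hpf := pw_integrable hf n
    have hpg := pw_integrable hg n
    have hae : ∀ᵐ ξ, ‖pw f (n+1) ξ - pw g (n+1) ξ‖ ≤
        ‖conv f (pw f n - pw g n) ξ‖ + ‖conv (f - g) (pw g n) ξ‖ := by
      filter_upwards [conv_exists hf hpf, conv_exists hf hpg, conv_exists hg hpg] with ξ h1 h2 h3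
      have : pw f (n+1) ξ - pw g (n+1) ξ =
          conv f (pw f n - pw g n) ξ + conv (f - g) (pw g n) ξ := by
        simp only [pw, conv, Pi.sub_apply, mul_sub, sub_mul]
        rw [integral_sub h1 h2, integral_sub h2 h3]; ring
      rw [this]; exact norm_add_le _ _
    have i1 := conv_integrable hf (hpf.sub hpg)
    have i2 := conv_integrable (hf.sub hg) hpg
    have := integral_mono_ae ((pw_integrable hf (n+1)).sub (pw_integrable hg (n+1))).norm
      (i1.norm.add i2.norm) hae
    refine this.trans ?_
    simp only [Pi.add_apply]
    rw [integral_add i1.norm i2.norm]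
    have a1 := conv_norm hf (hpf.sub hpg)
    have a2 := conv_norm (hf.sub hg) hpg
    have b1 : (∫ ξ, ‖f ξ‖) * ∫ ξ, ‖(pw f n - pw g n) ξ‖ ≤
      R * ((n + 1) * R ^ n * ∫ ξ, ‖f ξ - g ξ‖) :=
      mul_le_mul hfR ih (integral_nonneg fun _ => norm_nonneg _) hR0
    have b2 : (∫ ξ, ‖(f - g) ξ‖) * ∫ ξ, ‖pw g n ξ‖ ≤ (∫ ξ, ‖f ξ - g ξ‖) * R ^ (n+1) :=
      mul_le_mul_of_nonneg_left (pw_norm hg hgR n) hd0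
    push_cast
    calc _ ≤ _ := add_le_add (a1.trans b1) (a2.trans b2)
      _ = _ := by ring

theorem pw_meas {W : ℝ → ℝ → ℂ} (hW : StronglyMeasurable (Function.uncurry W)) (n : ℕ) :
    StronglyMeasurable (Function.uncurry fun t => pw (W t) n) := by
  induction n with
  | zero => exact hW
  | succ n ih =>
    have h1 : StronglyMeasurable fun p : (ℝ × ℝ) × ℝ => W p.1.1 p.2 :=
      hW.comp_measurable (g := fun p : (ℝ × ℝ) × ℝ => (p.1.1, p.2)) (by fun_prop)
    have h2 : StronglyMeasurable fun p : (ℝ × ℝ) × ℝ => pw (W p.1.1) n (p.1.2 - p.2) :=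
      ih.comp_measurable (g := fun p : (ℝ × ℝ) × ℝ => (p.1.1, p.1.2 - p.2)) (by fun_prop)
    exact (h1.mul h2).integral_prod_right

theorem minkowski {T : ℝ} (hT : 0 ≤ T) {G : ℝ → ℝ → ℂ}
    (hG : StronglyMeasurable (Function.uncurry G)) {B : ℝ}
    (hi : ∀ t ∈ Set.Ioc 0 T, Integrable (G t)) (hB : ∀ t ∈ Set.Ioc 0 T, ∫ ξ, ‖G t ξ‖ ≤ B) :
    (∀ᵐ ξ, IntegrableOn (fun t => G t ξ) (Set.Ioc 0 T)) ∧
    Integrable (fun ξ => ∫ t in Set.Ioc 0 T, G t ξ) ∧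
    ∫ ξ, ‖∫ t in Set.Ioc 0 T, G t ξ‖ ≤ T * B := by
  have hint : Integrable (Function.uncurry G) ((volume.restrict (Set.Ioc 0 T)).prod volume) := by
    rw [integrable_prod_iff hG.aestronglyMeasurable]
    refine ⟨(ae_restrict_mem measurableSet_Ioc).mono fun t ht => hi t ht, ?_⟩
    refine Integrable.mono' (g := fun _ => B) (integrable_const B)
      hG.norm.integral_prod_right.aestronglyMeasurable ?_
    refine (ae_restrict_mem measurableSet_Ioc).mono fun t ht => ?_
    rw [Real.norm_of_nonneg (integral_nonneg fun _ => norm_nonneg _)]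
    exact hB t ht
  refine ⟨hint.prod_left_ae, hint.integral_prod_right, ?_⟩
  calc ∫ ξ, ‖∫ t in Set.Ioc 0 T, G t ξ‖ ≤ ∫ ξ, ∫ t in Set.Ioc 0 T, ‖G t ξ‖ :=
        integral_mono hint.integral_prod_right.norm hint.norm.integral_prod_right
          fun ξ => norm_integral_le_integral_norm _
    _ = ∫ t in Set.Ioc 0 T, ∫ ξ, ‖G t ξ‖ := (integral_integral_swap hint.norm).symm
    _ ≤ ∫ t in Set.Ioc 0 T, B := by
        refine setIntegral_mono_on hint.norm.integral_prod_left (integrable_const B)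
          measurableSet_Ioc fun t ht => hB t ht
    _ = T * B := by simp [hT]

theorem lam_meas : Measurable lam := by
  unfold lam
  fun_prop

theorem lam_pos {ξ : ℝ} (h : ξ ≠ 0) : 0 < lam ξ := by
  unfold lam
  have := abs_pos.mpr h
  positivity

theorem mker_lip (t s ξ : ℝ) : |mker t ξ - mker s ξ| ≤ |t - s| := by
  unfold mker
  split_ifs with h
  · exact le_rfl
  · have hl := lam_pos h
    rw [← sub_div, abs_div, abs_of_pos hl, div_le_iff₀ hl]
    refine (Real.abs_sin_sub_sin_le _ _).trans (le_of_eq ?_)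
    rw [← sub_mul, abs_mul, abs_of_pos hl]

theorem mker_bound (t ξ : ℝ) : |mker t ξ| ≤ |t| := by
  have h := mker_lip t 0 ξ
  have : mker 0 ξ = 0 := by simp [mker]
  simpa [this] using h

theorem cos_lip (t s ξ : ℝ) : |Real.cos (t * lam ξ) - Real.cos (s * lam ξ)| ≤ |t - s| := by
  refine (Real.abs_cos_sub_cos_le _ _).trans ?_
  rw [← sub_mul, abs_mul, abs_of_nonneg (lam_nonneg ξ)]
  exact mul_le_of_le_one_right (abs_nonneg _) (lam_le_one ξ)

theorem mker_meas (t : ℝ) : Measurable (mker t) := by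
  unfold mker
  have := lam_meas
  exact Measurable.ite (measurableSet_singleton 0) measurable_const (by fun_prop)

theorem mult_integrable {f : ℝ → ℂ} (hf : Integrable f) {κ : ℝ → ℝ} (hκ : Measurable κ) {C : ℝ}
    (hC : ∀ ξ, |κ ξ| ≤ C) :
    Integrable (fun ξ => (κ ξ : ℂ) * f ξ) ∧ ∫ ξ, ‖(κ ξ : ℂ) * f ξ‖ ≤ C * ∫ ξ, ‖f ξ‖ := by
  have h1 : Integrable (fun ξ => (κ ξ : ℂ) * f ξ) := by
    refine hf.bdd_mul (c := C) (by fun_prop) (Eventually.of_forall fun ξ => ?_)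
    simpa using hC ξ
  refine ⟨h1, ?_⟩
  rw [← integral_const_mul]
  refine integral_mono h1.norm (hf.norm.const_mul C) fun ξ => ?_
  simp only [norm_mul, Complex.norm_real, Real.norm_eq_abs]
  exact mul_le_mul_of_nonneg_right (hC ξ) (norm_nonneg _)

theorem Shat_integrable {v₀ v₁ : ℝ → ℂ} (h₀ : Integrable v₀) (h₁ : Integrable v₁) (t : ℝ) :
    Integrable (Shat t v₀ v₁) := by
  have := lam_meas
  exact (mult_integrable h₀ (κ := fun ξ => Real.cos (t * lam ξ)) (by fun_prop)
    (fun ξ => Real.abs_cos_le_one _)).1.add (mult_integrable h₁ (mker_meas t) (mker_bound t)).1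

theorem Shat_bound {v₀ v₁ : ℝ → ℂ} (h₀ : Integrable v₀) (h₁ : Integrable v₁) {t : ℝ}
    (ht : |t| ≤ 1) :
    ∫ ξ, ‖Shat t v₀ v₁ ξ‖ ≤ (∫ ξ, ‖v₀ ξ‖) + ∫ ξ, ‖v₁ ξ‖ := by
  have := lam_meas
  obtain ⟨a1, a2⟩ := mult_integrable h₀ (κ := fun ξ => Real.cos (t * lam ξ)) (by fun_prop)
    (fun ξ => Real.abs_cos_le_one _)
  obtain ⟨b1, b2⟩ := mult_integrable h₁ (mker_meas t) (fun ξ => (mker_bound t ξ).trans ht)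
  rw [one_mul] at a2 b2
  refine le_trans ?_ (add_le_add a2 b2)
  rw [← integral_add a1.norm b1.norm]
  exact integral_mono (Shat_integrable h₀ h₁ t).norm (a1.norm.add b1.norm)
    fun ξ => norm_add_le _ _

theorem Shat_lip {v₀ v₁ : ℝ → ℂ} (h₀ : Integrable v₀) (h₁ : Integrable v₁) (t s : ℝ) :
    ∫ ξ, ‖Shat t v₀ v₁ ξ - Shat s v₀ v₁ ξ‖ ≤ |t - s| * ((∫ ξ, ‖v₀ ξ‖) + ∫ ξ, ‖v₁ ξ‖) := by
  have := lam_meas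
  have m1 := mker_meas t
  have m2 := mker_meas s
  obtain ⟨a1, a2⟩ := mult_integrable h₀
    (κ := fun ξ => Real.cos (t * lam ξ) - Real.cos (s * lam ξ)) (by fun_prop) (cos_lip t s)
  obtain ⟨b1, b2⟩ := mult_integrable h₁ (κ := fun ξ => mker t ξ - mker s ξ) (by fun_prop)
    (mker_lip t s)
  rw [mul_add]
  refine le_trans ?_ (add_le_add a2 b2)
  rw [← integral_add a1.norm b1.norm]
  refine integral_mono ((Shat_integrable h₀ h₁ t).sub (Shat_integrable h₀ h₁ s)).norm
    (a1.norm.add b1.norm) fun ξ => ?_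
  refine le_trans (le_of_eq ?_) (norm_add_le _ _)
  congr 1
  simp only [Shat]
  push_cast
  ring

/-- Truncated Duhamel kernel. -/
noncomputable def dker (t t' ξ : ℝ) : ℝ := Real.sin (max (t - t') 0 * lam ξ) * lam ξ

theorem ker_lip (t s t' ξ : ℝ) : |dker t t' ξ - dker s t' ξ| ≤ |t - s| := by
  unfold dker
  have h0 := lam_nonneg ξ
  have h1 := lam_le_one ξ
  rw [← sub_mul, abs_mul, abs_of_nonneg h0]
  refine (mul_le_of_le_one_right (abs_nonneg _) h1).trans ?_
  refine (Real.abs_sin_sub_sin_le _ _).trans ?_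
  rw [← sub_mul, abs_mul, abs_of_nonneg h0]
  refine (mul_le_of_le_one_right (abs_nonneg _) h1).trans ?_
  refine (abs_max_sub_max_le_abs _ _ _).trans (le_of_eq ?_)
  congr 1; ring

theorem ker_bound {T t t' : ℝ} (ht : t ∈ Set.Icc 0 T) (ht' : t' ∈ Set.Ioc 0 T) (ξ : ℝ) :
    |dker t t' ξ| ≤ T := by
  have h := ker_lip t 0 t' ξ
  have h2 : dker 0 t' ξ = 0 := by
    have : max (0 - t') 0 = 0 := max_eq_right (by linarith [ht'.1])
    rw [dker, this]
    simp
  rw [h2, sub_zero, sub_zero, abs_of_nonneg ht.1] at h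
  exact h.trans ht.2

theorem ker_meas (t : ℝ) : Measurable (Function.uncurry (dker t)) := by
  have := lam_meas
  unfold dker Function.uncurry
  fun_prop

theorem Ihat_eq {T t : ℝ} (ht : t ∈ Set.Icc 0 T) {W u : ℝ → ℝ → ℂ}
    (h : ∀ t' ∈ Set.Icc 0 T, W t' =ᵐ[volume] u t') (n : ℕ) (ξ : ℝ) :
    Ihat (n + 2) (fun _ => u) t ξ =
      ∫ t' in Set.Ioc 0 T, (dker t t' ξ : ℂ) * pw (W t') (n + 1) ξ := by
  unfold Ihat
  rw [intervalIntegral.integral_of_le ht.1]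
  rw [setIntegral_eq_of_subset_of_forall_sdiff_eq_zero (s := Set.Ioc 0 t) (t := Set.Ioc 0 T)
    measurableSet_Ioc (Set.Ioc_subset_Ioc_right ht.2)]
  · apply setIntegral_congr_fun measurableSet_Ioc
    intro t' ht'
    simp only
    rw [convList_ofFn (n + 1), pw_congr' (h t' ⟨ht'.1.le, ht'.2.trans ht.2⟩)]
    rw [dker, max_eq_left (by linarith [ht'.2])]
  · intro t' ht'
    have : t < t' := by
      by_contra hh
      exact ht'.2 ⟨ht'.1.1, not_lt.mp hh⟩
    rw [dker, max_eq_right (by linarith)]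
    simp

/-- Duhamel term of a jointly measurable curve. -/
noncomputable def Duh (n : ℕ) (T : ℝ) (W : ℝ → ℝ → ℂ) (t ξ : ℝ) : ℂ :=
  ∫ t' in Set.Ioc 0 T, (dker t t' ξ : ℂ) * pw (W t') (n + 1) ξ

theorem mult_minkowski {T : ℝ} (hT : 0 ≤ T) {F : ℝ → ℝ → ℂ}
    (hF : StronglyMeasurable (Function.uncurry F)) {B C : ℝ} (hC0 : 0 ≤ C)
    (hi : ∀ t ∈ Set.Ioc 0 T, Integrable (F t)) (hB : ∀ t ∈ Set.Ioc 0 T, ∫ ξ, ‖F t ξ‖ ≤ B)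
    {κ : ℝ → ℝ → ℝ} (hκ : Measurable (Function.uncurry κ))
    (hC : ∀ t ∈ Set.Ioc 0 T, ∀ ξ, |κ t ξ| ≤ C) :
    (∀ᵐ ξ, IntegrableOn (fun t => (κ t ξ : ℂ) * F t ξ) (Set.Ioc 0 T)) ∧
    Integrable (fun ξ => ∫ t in Set.Ioc 0 T, (κ t ξ : ℂ) * F t ξ) ∧
    ∫ ξ, ‖∫ t in Set.Ioc 0 T, (κ t ξ : ℂ) * F t ξ‖ ≤ T * (C * B) := by
  have hm : ∀ t, Measurable (κ t) := fun t => hκ.comp measurable_prodMk_left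
  refine minkowski hT (G := fun t ξ => (κ t ξ : ℂ) * F t ξ) ?_ ?_ ?_
  · exact (Complex.measurable_ofReal.comp hκ).stronglyMeasurable.mul hF
  · intro t ht
    exact (mult_integrable (hi t ht) (hm t) (hC t ht)).1
  · intro t ht
    exact (mult_integrable (hi t ht) (hm t) (hC t ht)).2.trans
      (mul_le_mul_of_nonneg_left (hB t ht) hC0)

section
variable {n : ℕ} {T R : ℝ} {W W' : ℝ → ℝ → ℂ}

theorem Duh_main (hT : 0 ≤ T) (hW : StronglyMeasurable (Function.uncurry W))
    (hi : ∀ t ∈ Set.Icc 0 T, Integrable (W t)) (hR : ∀ t ∈ Set.Icc 0 T, ∫ ξ, ‖W t ξ‖ ≤ R)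
    {t : ℝ} (ht : t ∈ Set.Icc 0 T) :
    (∀ᵐ ξ, IntegrableOn (fun t' => (dker t t' ξ : ℂ) * pw (W t') (n + 1) ξ) (Set.Ioc 0 T)) ∧
    Integrable (Duh n T W t) ∧ ∫ ξ, ‖Duh n T W t ξ‖ ≤ T * (T * R ^ (n + 2)) :=
  mult_minkowski hT (pw_meas hW (n + 1)) hT
    (fun s hs => pw_integrable (hi s (Set.Ioc_subset_Icc_self hs)) _)
    (fun s hs => pw_norm (hi s (Set.Ioc_subset_Icc_self hs)) (hR s (Set.Ioc_subset_Icc_self hs)) _)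
    (ker_meas t) (fun s hs => ker_bound ht hs)

theorem Duh_lip (hT : 0 ≤ T) (hW : StronglyMeasurable (Function.uncurry W))
    (hi : ∀ t ∈ Set.Icc 0 T, Integrable (W t)) (hR : ∀ t ∈ Set.Icc 0 T, ∫ ξ, ‖W t ξ‖ ≤ R)
    {t s : ℝ} (ht : t ∈ Set.Icc 0 T) (hs : s ∈ Set.Icc 0 T) :
    ∫ ξ, ‖Duh n T W t ξ - Duh n T W s ξ‖ ≤ T * (|t - s| * R ^ (n + 2)) := by
  obtain ⟨-, -, h⟩ := mult_minkowski hT (pw_meas hW (n + 1)) (abs_nonneg (t - s))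
    (fun s hs => pw_integrable (hi s (Set.Ioc_subset_Icc_self hs)) _)
    (fun s hs => pw_norm (hi s (Set.Ioc_subset_Icc_self hs)) (hR s (Set.Ioc_subset_Icc_self hs)) _)
    (κ := fun t' ξ => dker t t' ξ - dker s t' ξ) ((ker_meas t).sub (ker_meas s))
    (fun t' _ => ker_lip t s t')
  refine le_trans (le_of_eq (integral_congr_ae ?_)) h
  filter_upwards [(Duh_main (n := n) hT hW hi hR ht).1, (Duh_main (n := n) hT hW hi hR hs).1]
    with ξ h1 h2
  rw [Duh, Duh, ← integral_sub h1 h2]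
  push_cast
  simp only [sub_mul]

theorem Duh_diff (hT : 0 ≤ T) (hW : StronglyMeasurable (Function.uncurry W))
    (hi : ∀ t ∈ Set.Icc 0 T, Integrable (W t)) (hR : ∀ t ∈ Set.Icc 0 T, ∫ ξ, ‖W t ξ‖ ≤ R)
    (hW' : StronglyMeasurable (Function.uncurry W'))
    (hi' : ∀ t ∈ Set.Icc 0 T, Integrable (W' t)) (hR' : ∀ t ∈ Set.Icc 0 T, ∫ ξ, ‖W' t ξ‖ ≤ R)
    {δ : ℝ} (hδ : ∀ t ∈ Set.Icc 0 T, ∫ ξ, ‖W t ξ - W' t ξ‖ ≤ δ)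
    {t : ℝ} (ht : t ∈ Set.Icc 0 T) :
    ∫ ξ, ‖Duh n T W t ξ - Duh n T W' t ξ‖ ≤ T * (T * ((n + 2) * R ^ (n + 1) * δ)) := by
  have hR0 : 0 ≤ R := (integral_nonneg fun _ => norm_nonneg _).trans (hR t ht)
  obtain ⟨-, -, h⟩ := mult_minkowski hT
    (F := fun t ξ => pw (W t) (n + 1) ξ - pw (W' t) (n + 1) ξ) (B := (n + 2) * R ^ (n + 1) * δ)
    ((pw_meas hW (n + 1)).sub (pw_meas hW' (n + 1))) hT
    (fun s hs => (pw_integrable (hi s (Set.Ioc_subset_Icc_self hs)) _).sub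
      (pw_integrable (hi' s (Set.Ioc_subset_Icc_self hs)) _))
    (fun s hs => by
      have hs := Set.Ioc_subset_Icc_self hs
      refine (pw_diff (hi s hs) (hi' s hs) (hR s hs) (hR' s hs) (n + 1)).trans ?_
      push_cast
      rw [add_assoc, one_add_one_eq_two]
      exact mul_le_mul_of_nonneg_left (hδ s hs) (by positivity))
    (ker_meas t) (fun s hs => ker_bound ht hs)
  refine le_trans (le_of_eq (integral_congr_ae ?_)) h
  filter_upwards [(Duh_main (n := n) hT hW hi hR ht).1, (Duh_main (n := n) hT hW' hi' hR' ht).1]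
    with ξ h1 h2
  rw [Duh, Duh, ← integral_sub h1 h2]
  simp only [mul_sub]
end

theorem dist_toL1 {f g : ℝ → ℂ} (hf : Integrable f) (hg : Integrable g) :
    dist (hf.toL1 f) (hg.toL1 g) = ∫ ξ, ‖f ξ - g ξ‖ := by
  rw [dist_eq_norm, ← Integrable.toL1_sub f g hf hg, L1.norm_of_fun_eq_integral_norm]
  rfl

theorem eLpNorm_ofReal {f : ℝ → ℂ} (hf : Integrable f) :
    eLpNorm f 1 volume = ENNReal.ofReal (∫ ξ, ‖f ξ‖) := by
  rw [eLpNorm_one_eq_lintegral_enorm, ofReal_integral_norm_eq_lintegral_enorm hf]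

section
variable {T : ℝ} (hT : 0 ≤ T)

/-- Extension of a curve on `[0,T]` to all times, as functions. -/
noncomputable def fnE (e : C(Set.Icc (0:ℝ) T, ℝ →₁[volume] ℂ)) (t : ℝ) : ℝ → ℂ :=
  e (Set.projIcc 0 T hT t)

theorem exists_W (e : C(Set.Icc (0:ℝ) T, ℝ →₁[volume] ℂ)) :
    ∃ W : ℝ → ℝ → ℂ, StronglyMeasurable (Function.uncurry W) ∧ (∀ t, Integrable (W t)) ∧
      (∀ t, W t =ᵐ[volume] fnE hT e t) ∧ ∀ t, ∫ ξ, ‖W t ξ‖ ≤ ‖e‖ := by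
  obtain ⟨W, h1, h2⟩ := exists_rep (fun t => e (Set.projIcc 0 T hT t))
    (e.continuous.comp continuous_projIcc)
  refine ⟨W, h1, fun t => (L1.integrable_coeFn _).congr (h2 t).symm, h2, fun t => ?_⟩
  refine le_trans (le_of_eq ?_) (e.norm_coe_le_norm (Set.projIcc 0 T hT t))
  rw [L1.norm_eq_integral_norm]
  apply integral_congr_ae
  filter_upwards [h2 t] with ξ h
  rw [h]

theorem Ihat_fnE {e : C(Set.Icc (0:ℝ) T, ℝ →₁[volume] ℂ)} {W : ℝ → ℝ → ℂ}
    (h : ∀ t, W t =ᵐ[volume] fnE hT e t) (n : ℕ) {t : ℝ} (ht : t ∈ Set.Icc 0 T) :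
    Ihat (n + 2) (fun _ => fnE hT e) t = Duh n T W t := by
  ext ξ
  exact Ihat_eq ht (fun s _ => h s) n ξ

/-- Right hand side of the Duhamel formula. -/
noncomputable def rhs (n : ℕ) (v₀ v₁ : ℝ → ℂ) (e : C(Set.Icc (0:ℝ) T, ℝ →₁[volume] ℂ)) (t : ℝ) :
    ℝ → ℂ :=
  fun ξ => Shat t v₀ v₁ ξ + Ihat (n + 2) (fun _ => fnE hT e) t ξ

variable (n : ℕ) {v₀ v₁ : ℝ → ℂ}

theorem rhs_integrable (h₀ : Integrable v₀) (h₁ : Integrable v₁)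
    (e : C(Set.Icc (0:ℝ) T, ℝ →₁[volume] ℂ)) {t : ℝ} (ht : t ∈ Set.Icc 0 T) :
    Integrable (rhs hT n v₀ v₁ e t) := by
  obtain ⟨W, hW, hi, hae, hR⟩ := exists_W hT e
  unfold rhs
  rw [Ihat_fnE hT hae n ht]
  exact (Shat_integrable h₀ h₁ t).add
    (Duh_main hT hW (fun t _ => hi t) (fun t _ => hR t) ht).2.1

theorem rhs_bound (h₀ : Integrable v₀) (h₁ : Integrable v₁)
    (hT1 : T ≤ 1) (e : C(Set.Icc (0:ℝ) T, ℝ →₁[volume] ℂ)) {R : ℝ} (he : ‖e‖ ≤ R)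
    {t : ℝ} (ht : t ∈ Set.Icc 0 T) :
    ∫ ξ, ‖rhs hT n v₀ v₁ e t ξ‖ ≤
      ((∫ ξ, ‖v₀ ξ‖) + ∫ ξ, ‖v₁ ξ‖) + T * (T * R ^ (n + 2)) := by
  have hint := rhs_integrable hT n h₀ h₁ e ht
  obtain ⟨W, hW, hi, hae, hR⟩ := exists_W hT e
  unfold rhs at hint ⊢
  rw [Ihat_fnE hT hae n ht] at hint ⊢
  obtain ⟨-, d1, d2⟩ := Duh_main (n := n) hT hW (fun t _ => hi t) (fun t _ => (hR t).trans he) ht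
  have s1 := Shat_integrable h₀ h₁ t
  have s2 := Shat_bound h₀ h₁ (t := t) (by rw [abs_of_nonneg ht.1]; exact ht.2.trans hT1)
  refine le_trans ?_ (add_le_add s2 d2)
  rw [← integral_add s1.norm d1.norm]
  exact integral_mono hint.norm (s1.norm.add d1.norm) fun ξ => norm_add_le _ _

theorem rhs_lip (h₀ : Integrable v₀) (h₁ : Integrable v₁)
    (e : C(Set.Icc (0:ℝ) T, ℝ →₁[volume] ℂ))
    {t s : ℝ} (ht : t ∈ Set.Icc 0 T) (hs : s ∈ Set.Icc 0 T) :
    ∫ ξ, ‖rhs hT n v₀ v₁ e t ξ - rhs hT n v₀ v₁ e s ξ‖ ≤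
      (((∫ ξ, ‖v₀ ξ‖) + ∫ ξ, ‖v₁ ξ‖) + T * ‖e‖ ^ (n + 2)) * |t - s| := by
  have hint := (rhs_integrable hT n h₀ h₁ e ht).sub (rhs_integrable hT n h₀ h₁ e hs)
  obtain ⟨W, hW, hi, hae, hR⟩ := exists_W hT e
  unfold rhs at hint ⊢
  rw [Ihat_fnE hT hae n ht, Ihat_fnE hT hae n hs] at hint ⊢
  obtain ⟨-, d1, -⟩ := Duh_main (n := n) hT hW (fun t _ => hi t) (fun t _ => hR t) ht
  obtain ⟨-, d2, -⟩ := Duh_main (n := n) hT hW (fun t _ => hi t) (fun t _ => hR t) hs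
  have d := Duh_lip (n := n) hT hW (fun t _ => hi t) (fun t _ => hR t) ht hs
  have s1 := (Shat_integrable h₀ h₁ t).sub (Shat_integrable h₀ h₁ s)
  have s2 := Shat_lip h₀ h₁ t s
  refine le_trans ?_ ((add_le_add s2 d).trans (le_of_eq (by ring)))
  have d3 := d1.sub d2
  have := integral_add s1.norm d3.norm
  simp only [Pi.sub_apply] at this
  rw [← this]
  refine integral_mono hint.norm (s1.norm.add d3.norm) fun ξ => ?_
  refine le_trans (le_of_eq ?_) (norm_add_le _ _)
  congr 1
  ring

theorem rhs_diff (e e' : C(Set.Icc (0:ℝ) T, ℝ →₁[volume] ℂ)) {R : ℝ} (he : ‖e‖ ≤ R)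
    (he' : ‖e'‖ ≤ R) {t : ℝ} (ht : t ∈ Set.Icc 0 T) :
    ∫ ξ, ‖rhs hT n v₀ v₁ e t ξ - rhs hT n v₀ v₁ e' t ξ‖ ≤
      T * (T * ((n + 2) * R ^ (n + 1) * dist e e')) := by
  obtain ⟨W, hW, hi, hae, hR⟩ := exists_W hT e
  obtain ⟨W', hW', hi', hae', hR'⟩ := exists_W hT e'
  unfold rhs
  rw [Ihat_fnE hT hae n ht, Ihat_fnE hT hae' n ht]
  simp only [add_sub_add_left_eq_sub]
  refine Duh_diff hT hW (fun t _ => hi t) (fun t _ => (hR t).trans he)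
    hW' (fun t _ => hi' t) (fun t _ => (hR' t).trans he') (fun s _ => ?_) ht
  refine le_trans (le_of_eq ?_) (ContinuousMap.dist_apply_le_dist (Set.projIcc 0 T hT s))
  rw [L1.dist_eq_integral_dist]
  apply integral_congr_ae
  filter_upwards [hae s, hae' s] with ξ h h'
  rw [h, h', dist_eq_norm]
  rfl

/-- The Duhamel map. -/
noncomputable def Phi (h₀ : Integrable v₀) (h₁ : Integrable v₁)
    (e : C(Set.Icc (0:ℝ) T, ℝ →₁[volume] ℂ)) :
    C(Set.Icc (0:ℝ) T, ℝ →₁[volume] ℂ) where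
  toFun t := (rhs_integrable hT n h₀ h₁ e t.2).toL1 _
  continuous_toFun := by
    refine (LipschitzWith.of_dist_le'
      (K := ((∫ ξ, ‖v₀ ξ‖) + ∫ ξ, ‖v₁ ξ‖) + T * ‖e‖ ^ (n + 2)) fun t s => ?_).continuous
    rw [dist_toL1]
    exact rhs_lip hT n h₀ h₁ e t.2 s.2

theorem Phi_ae (h₀ : Integrable v₀) (h₁ : Integrable v₁)
    (e : C(Set.Icc (0:ℝ) T, ℝ →₁[volume] ℂ)) (t : Set.Icc (0:ℝ) T) :
    Phi hT n h₀ h₁ e t =ᵐ[volume] rhs hT n v₀ v₁ e t :=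
  Integrable.coeFn_toL1 (rhs_integrable hT n h₀ h₁ e t.2)

theorem Phi_bound (h₀ : Integrable v₀) (h₁ : Integrable v₁)
    (hT1 : T ≤ 1) (e : C(Set.Icc (0:ℝ) T, ℝ →₁[volume] ℂ)) {M : ℝ} (hM0 : 0 ≤ M)
    (he : ‖e‖ ≤ 2 * M)
    (hM : (∫ ξ, ‖v₀ ξ‖) + ∫ ξ, ‖v₁ ξ‖ ≤ M) (hsm : T * (T * (2 * M) ^ (n + 2)) ≤ M) :
    ‖Phi hT n h₀ h₁ e‖ ≤ 2 * M := by
  rw [ContinuousMap.norm_le _ (by positivity)]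
  intro t
  change ‖(rhs_integrable hT n h₀ h₁ e t.2).toL1 _‖ ≤ _
  rw [L1.norm_of_fun_eq_integral_norm]
  exact (rhs_bound hT n h₀ h₁ hT1 e he t.2).trans (by linarith)

theorem Phi_dist (h₀ : Integrable v₀) (h₁ : Integrable v₁)
    (e e' : C(Set.Icc (0:ℝ) T, ℝ →₁[volume] ℂ)) {R : ℝ} (he : ‖e‖ ≤ R)
    (he' : ‖e'‖ ≤ R) (hsm : T * (T * ((n + 2) * R ^ (n + 1))) ≤ 1 / 2) :
    dist (Phi hT n h₀ h₁ e) (Phi hT n h₀ h₁ e') ≤ 1 / 2 * dist e e' := by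
  rw [ContinuousMap.dist_le (by positivity)]
  intro t
  change dist ((rhs_integrable hT n h₀ h₁ e t.2).toL1 _)
    ((rhs_integrable hT n h₀ h₁ e' t.2).toL1 _) ≤ _
  rw [dist_toL1]
  refine (rhs_diff hT n e e' he he' t.2).trans ?_
  calc _ = T * (T * ((n + 2) * R ^ (n + 1))) * dist e e' := by ring
    _ ≤ _ := mul_le_mul_of_nonneg_right hsm dist_nonneg

theorem Phi_fixed (h₀ : Integrable v₀) (h₁ : Integrable v₁)
    (hT1 : T ≤ 1) {M : ℝ} (hM0 : 0 ≤ M)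
    (hM : (∫ ξ, ‖v₀ ξ‖) + ∫ ξ, ‖v₁ ξ‖ ≤ M) (hsm : T * (T * (2 * M) ^ (n + 2)) ≤ M)
    (hsm' : T * (T * ((n + 2) * (2 * M) ^ (n + 1))) ≤ 1 / 2) :
    ∃ e : C(Set.Icc (0:ℝ) T, ℝ →₁[volume] ℂ), ‖e‖ ≤ 2 * M ∧ Phi hT n h₀ h₁ e = e := by
  let S : Set C(Set.Icc (0:ℝ) T, ℝ →₁[volume] ℂ) := Metric.closedBall 0 (2 * M)
  have hS : ∀ e, e ∈ S ↔ ‖e‖ ≤ 2 * M := fun e => by simp [S]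
  have hmaps : Set.MapsTo (Phi hT n h₀ h₁) S S := fun e he =>
    (hS _).2 (Phi_bound hT n h₀ h₁ hT1 e hM0 ((hS e).1 he) hM hsm)
  have hcon : ContractingWith (1 / 2) (hmaps.restrict (Phi hT n h₀ h₁) S S) := by
    refine ⟨by rw [← NNReal.coe_lt_coe]; norm_num, LipschitzWith.of_dist_le_mul fun a b => ?_⟩
    have := Phi_dist hT n h₀ h₁ a.1 b.1 ((hS _).1 a.2) ((hS _).1 b.2) hsm'
    simpa using! this
  obtain ⟨y, hy, hfix, -⟩ := hcon.exists_fixedPoint' (Metric.isClosed_closedBall.isComplete)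
    hmaps (x := 0) ((hS 0).2 (by simpa using hM0)) (edist_ne_top _ _)
  exact ⟨y, (hS y).1 hy, hfix⟩

theorem curve_of_cont {w : ℝ → ℝ → ℂ} (hi : ∀ t ∈ Set.Icc (0 : ℝ) T, Integrable (w t))
    (hc : ContinuousL1On T w) :
    ∃ e : C(Set.Icc (0:ℝ) T, ℝ →₁[volume] ℂ), ∀ t : Set.Icc (0:ℝ) T,
      e t = (hi t t.2).toL1 (w t) := by
  refine ⟨⟨fun t => (hi t t.2).toL1 (w t), ?_⟩, fun t => rfl⟩
  rw [continuous_iff_continuousAt]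
  intro t₀
  rw [ContinuousAt, tendsto_iff_edist_tendsto_0]
  have h := hc t₀ t₀.2
  have h2 := h.comp (tendsto_nhdsWithin_iff.2
    ⟨(continuous_subtype_val (p := fun x => x ∈ Set.Icc (0:ℝ) T)).continuousAt (x := t₀),
      Eventually.of_forall fun x => x.2⟩)
  refine h2.congr fun t => ?_
  simp only [Function.comp]
  rw [edist_dist, dist_toL1]
  exact eLpNorm_ofReal ((hi t t.2).sub (hi t₀ t₀.2))

end
/-- Local well-posedness of gIBq in the Wiener algebra `FL¹`. -/
theorem local_wellposedness_FL1 (k : ℕ) (hk : 2 ≤ k) :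
    ∃ c : ℝ, 0 < c ∧
      ∀ M : ℝ, 0 < M →
        ∀ T : ℝ, 0 < T → T ≤ 1 → T ^ 2 * M ^ (k - 1) ≤ c →
          ∀ v₀ v₁ : ℝ → ℂ, Integrable v₀ → Integrable v₁ →
            eLpNorm v₀ 1 volume + eLpNorm v₁ 1 volume ≤ ENNReal.ofReal M →
            ∃ v : ℝ → ℝ → ℂ, IsGIBqSol k T v₀ v₁ v ∧
              (∀ t ∈ Set.Icc (0 : ℝ) T, eLpNorm (v t) 1 volume ≤ ENNReal.ofReal (2 * M)) ∧
              ∀ w : ℝ → ℝ → ℂ, IsGIBqSol k T v₀ v₁ w →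
                (∀ t ∈ Set.Icc (0 : ℝ) T, eLpNorm (w t) 1 volume ≤ ENNReal.ofReal (2 * M)) →
                ∀ t ∈ Set.Icc (0 : ℝ) T, w t =ᵐ[volume] v t := by
  obtain ⟨n, rfl⟩ : ∃ n, k = n + 2 := ⟨k - 2, by omega⟩
  refine ⟨1 / ((n + 2) * 2 ^ (n + 2)), by positivity, ?_⟩
  intro M hM T hT hT1 hsmall v₀ v₁ h₀ h₁ hdata
  have hT0 := hT.le
  have hdata' : (∫ ξ, ‖v₀ ξ‖) + ∫ ξ, ‖v₁ ξ‖ ≤ M := by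
    rw [eLpNorm_ofReal h₀, eLpNorm_ofReal h₁, ← ENNReal.ofReal_add
      (integral_nonneg fun _ => norm_nonneg _) (integral_nonneg fun _ => norm_nonneg _)] at hdata
    exact (ENNReal.ofReal_le_ofReal_iff hM.le).1 hdata
  have hexp : n + 2 - 1 = n + 1 := by omega
  rw [hexp, le_div_iff₀ (by positivity)] at hsmall
  have hsm' : T * (T * ((n + 2) * (2 * M) ^ (n + 1))) ≤ 1 / 2 := by
    rw [mul_pow]
    have : T * (T * ((n + 2) * (2 ^ (n + 1) * M ^ (n + 1)))) * 2 =
      T ^ 2 * M ^ (n + 1) * ((n + 2) * 2 ^ (n + 2)) := by ring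
    linarith
  have hsm : T * (T * (2 * M) ^ (n + 2)) ≤ M := by
    have h1 : T * (T * (2 * M) ^ (n + 2)) * (n + 2) =
      T * (T * ((n + 2) * (2 * M) ^ (n + 1))) * (2 * M) := by ring
    have h2 : T * (T * ((n + 2) * (2 * M) ^ (n + 1))) * (2 * M) ≤ 1 / 2 * (2 * M) :=
      mul_le_mul_of_nonneg_right hsm' (by positivity)
    have h3 : 0 ≤ T * (T * (2 * M) ^ (n + 2)) := by positivity
    have h4 : (0:ℝ) ≤ n := Nat.cast_nonneg n
    nlinarith [mul_nonneg h3 h4]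
  obtain ⟨e, he, hfix⟩ := Phi_fixed hT0 n h₀ h₁ hT1 hM.le hdata' hsm hsm'
  have hproj : ∀ t (ht : t ∈ Set.Icc 0 T), fnE hT0 e t = e ⟨t, ht⟩ := fun t ht => by
    rw [fnE, Set.projIcc_of_mem hT0 ht]
  have hint : ∀ t, Integrable (fnE hT0 e t) := fun t => L1.integrable_coeFn _
  refine ⟨fnE hT0 e, ⟨fun t _ => hint t, ?_, ?_⟩, ?_, ?_⟩
  · intro t₀ _
    have hcont : Continuous fun t => e (Set.projIcc 0 T hT0 t) :=
      e.continuous.comp continuous_projIcc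
    have h := (tendsto_iff_edist_tendsto_0.1 (hcont.tendsto t₀)).mono_left
      (nhdsWithin_le_nhds (s := Set.Icc 0 T))
    refine h.congr fun t => ?_
    rw [edist_dist, L1.dist_eq_integral_dist]
    simp only [dist_eq_norm]
    exact (eLpNorm_ofReal ((hint t).sub (hint t₀))).symm
  · intro t ht
    have h := Phi_ae hT0 n h₀ h₁ e ⟨t, ht⟩
    rw [hfix] at h
    rw [hproj t ht]
    exact h
  · intro t ht
    rw [eLpNorm_ofReal (hint t)]
    apply ENNReal.ofReal_le_ofReal
    rw [hproj t ht, ← L1.norm_eq_integral_norm]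
    exact (e.norm_coe_le_norm _).trans he
  · rintro w ⟨hwi, hwc, hweq⟩ hwb t ht
    obtain ⟨e', he'⟩ := curve_of_cont hwi hwc
    have hae : ∀ s ∈ Set.Icc 0 T, fnE hT0 e' s =ᵐ[volume] w s := fun s hs => by
      rw [fnE, Set.projIcc_of_mem hT0 hs, he' ⟨s, hs⟩]
      exact Integrable.coeFn_toL1 _
    have hnorm : ‖e'‖ ≤ 2 * M := by
      rw [ContinuousMap.norm_le _ (by positivity)]
      intro s
      rw [he' s, L1.norm_of_fun_eq_integral_norm]
      have := hwb s s.2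
      rw [eLpNorm_ofReal (hwi s s.2)] at this
      exact (ENNReal.ofReal_le_ofReal_iff (by positivity)).1 this
    have hfix' : Phi hT0 n h₀ h₁ e' = e' := by
      ext1 s
      rw [he' s]
      refine (Integrable.toL1_eq_toL1_iff _ _ (rhs_integrable hT0 n h₀ h₁ e' s.2) (hwi s s.2)).2 ?_
      filter_upwards [hweq s s.2] with ξ hξ
      rw [hξ, rhs, Ihat_eq s.2 hae n ξ, Ihat_eq s.2 (fun s _ => ae_eq_refl (fnE hT0 e' s)) n ξ]
    have hd := Phi_dist hT0 n h₀ h₁ e' e hnorm he hsm'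
    rw [hfix, hfix'] at hd
    have hee : e' = e := dist_le_zero.1 (by linarith)
    rw [← hee]
    exact (hae t ht).symm
end
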